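/- Every barbed simple polygon in the plane can be convexified by a motion that remains entirely within its plane: there is a continuous, simplicity-preserving, edge-length-preserving deformation, with all intermediate configurations lying in the same plane, whose final configuration is a convex polygon. -/

import Mathlib

noncomputable section

/-- The Euclidean plane. -/
abbrev E2 := EuclideanSpace ℝ (Fin 2)

/-- `v 0, …, v (n-1)` is a simple closed polygonal chain (simple polygon) in ℝ²:
`n ≥ 3`, the vertices are pairwise distinct, and two edges `[v i, v ((i+1) % n)]`,
`[v j, v ((j+1) % n)]` (for `i < j < n`) are disjoint unless they are cyclically
consecutive, in which case they meet exactly in their common vertex. -/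
def IsSimplePolygon (n : ℕ) (v : ℕ → E2) : Prop :=
  3 ≤ n ∧
  (∀ i j, i < n → j < n → i ≠ j → v i ≠ v j) ∧
  (∀ i j, i < j → j < n →
    segment ℝ (v i) (v ((i + 1) % n)) ∩ segment ℝ (v j) (v ((j + 1) % n)) =
      if i + 1 = j then {v j}
      else if i = 0 ∧ j = n - 1 then {v 0}
      else ∅)

/-- The boundary of the polygon `v 0, …, v (n-1)`: the union of its edges. -/
def polygonBoundary (n : ℕ) (v : ℕ → E2) : Set E2 :=
  {x | ∃ i, i < n ∧ x ∈ segment ℝ (v i) (v ((i + 1) % n))}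

/-- The interior of the simple polygon `v 0, …, v (n-1)`: the points not on the
boundary whose connected component in the complement of the boundary is bounded. -/
def polygonInterior (n : ℕ) (v : ℕ → E2) : Set E2 :=
  {x | x ∉ polygonBoundary n v ∧
    Bornology.IsBounded (connectedComponentIn (polygonBoundary n v)ᶜ x)}

/-- The configuration `w 0, …, w (n-1)` in ℝ² is a convex polygon: the vertices are
in strictly convex position (no vertex is in the convex hull of the others) and the
cyclic order of the chain agrees with the order of the vertices along the boundary
of their convex hull: each edge lies on a supporting line of the configuration,
with all other vertices strictly on one side. -/
def IsConvexPolygonConfig (n : ℕ) (w : ℕ → E2) : Prop :=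
  (∀ i, i < n → w i ∉ convexHull ℝ {x | ∃ j, j < n ∧ j ≠ i ∧ x = w j}) ∧
  (∀ i, i < n → ∃ f : E2 →ₗ[ℝ] ℝ,
    f (w i) = f (w ((i + 1) % n)) ∧
    ∀ j, j < n → j ≠ i → j ≠ (i + 1) % n → f (w j) < f (w i))

/-- The simple polygon `v 0, …, v (n-1)` is barbed: it has an ear `v i` (a vertex
such that the open segment joining its cyclic neighbours lies in the interior of
the polygon) whose removal (replacing the two edges at `v i` by the single segment
joining its neighbours) yields a convex polygon. -/
def IsBarbed (n : ℕ) (v : ℕ → E2) : Prop :=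
  ∃ i, i < n ∧
    openSegment ℝ (v ((i + n - 1) % n)) (v ((i + 1) % n)) ⊆ polygonInterior n v ∧
    IsConvexPolygonConfig (n - 1) (fun j => if j < i then v j else v (j + 1))

/-- A planar motion of the polygon `v 0, …, v (n-1)`: a continuous family of
configurations in ℝ² over `[0,1]`, starting at `v`, remaining a simple polygon at
all times, and preserving all edge lengths. -/
def IsPlanarMotion (n : ℕ) (v : ℕ → E2) (γ : ℝ → ℕ → E2) : Prop :=
  (∀ i, i < n → ContinuousOn (fun t => γ t i) (Set.Icc 0 1)) ∧
  (∀ i, i < n → γ 0 i = v i) ∧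
  (∀ t ∈ Set.Icc (0 : ℝ) 1, IsSimplePolygon n (γ t)) ∧
  (∀ t ∈ Set.Icc (0 : ℝ) 1, ∀ i, i < n →
    ‖γ t ((i + 1) % n) - γ t i‖ = ‖v ((i + 1) % n) - v i‖)

/-- Cosine of the angle with half-angle tangent `u`. -/
def hcos (u : ℝ) : ℝ := (1 - u ^ 2) / (1 + u ^ 2)

/-- Sine of the angle with half-angle tangent `u`. -/
def hsin (u : ℝ) : ℝ := 2 * u / (1 + u ^ 2)

theorem hcos_sq_add_hsin_sq (u : ℝ) : hcos u ^ 2 + hsin u ^ 2 = 1 := by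
  unfold hcos hsin
  have : 1 + u ^ 2 ≠ 0 := by positivity
  field_simp
  ring

theorem hcos_le_one (u : ℝ) : hcos u ≤ 1 := by
  nlinarith [hcos_sq_add_hsin_sq u, sq_nonneg (hsin u), sq_nonneg (hcos u - 1)]

theorem hsin_pos {u : ℝ} (hu : 0 < u) : 0 < hsin u := by unfold hsin; positivity

theorem hsin_neg {u : ℝ} (hu : u < 0) : hsin u < 0 := by
  unfold hsin
  exact div_neg_of_neg_of_pos (by linarith) (by positivity)

theorem continuous_hcos : Continuous hcos := by
  unfold hcos
  exact Continuous.div (by fun_prop) (by fun_prop) (fun u => by positivity)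

theorem continuous_hsin : Continuous hsin := by
  unfold hsin
  exact Continuous.div (by fun_prop) (by fun_prop) (fun u => by positivity)

/-- The sine of the angle difference in terms of half-angle tangents. -/
theorem hcos_mul_hsin_sub (u v : ℝ) :
    hcos u * hsin v - hsin u * hcos v =
      2 * (v - u) * (1 + u * v) / ((1 + u ^ 2) * (1 + v ^ 2)) := by
  unfold hcos hsin
  have h1 : 1 + u ^ 2 ≠ 0 := by positivity
  have h2 : 1 + v ^ 2 ≠ 0 := by positivity
  field_simp
  ring

/-- Monotonicity, along a hyperbolic geodesic from `(c₁, y₁)` to `(c₂, y₂)`, of the derivative of the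
Busemann function of the ideal point `u` in the upper half plane. -/
theorem busemann_derivative_monotone (u c₁ c₂ : ℝ) {y₁ y₂ : ℝ} (h₁ : 0 < y₁) (h₂ : 0 < y₂) :
    ((c₂ - c₁) ^ 2 + (y₂ ^ 2 - y₁ ^ 2)) * hcos ((u - c₁) / y₁)
        - 2 * (c₂ - c₁) * y₁ * hsin ((u - c₁) / y₁) ≤
      ((y₂ ^ 2 - y₁ ^ 2) - (c₂ - c₁) ^ 2) * hcos ((u - c₂) / y₂)
        - 2 * (c₂ - c₁) * y₂ * hsin ((u - c₂) / y₂) := by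
  have e1 : 0 < y₁ ^ 2 + (u - c₁) ^ 2 := by positivity
  have e2 : 0 < y₂ ^ 2 + (u - c₂) ^ 2 := by positivity
  have hc : ∀ x y : ℝ, 0 < y → hcos (x / y) = (y ^ 2 - x ^ 2) / (y ^ 2 + x ^ 2) := by
    intro x y hy
    have : y ^ 2 + x ^ 2 ≠ 0 := by positivity
    unfold hcos
    field_simp
  have hs : ∀ x y : ℝ, 0 < y → hsin (x / y) = 2 * x * y / (y ^ 2 + x ^ 2) := by
    intro x y hy
    have : y ^ 2 + x ^ 2 ≠ 0 := by positivity
    unfold hsin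
    field_simp
  rw [hc _ _ h₁, hc _ _ h₂, hs _ _ h₁, hs _ _ h₂, ← sub_nonneg]
  have key : ((y₂ ^ 2 - y₁ ^ 2) - (c₂ - c₁) ^ 2) * ((y₂ ^ 2 - (u - c₂) ^ 2) / (y₂ ^ 2 + (u - c₂) ^ 2))
        - 2 * (c₂ - c₁) * y₂ * (2 * (u - c₂) * y₂ / (y₂ ^ 2 + (u - c₂) ^ 2)) -
      (((c₂ - c₁) ^ 2 + (y₂ ^ 2 - y₁ ^ 2)) * ((y₁ ^ 2 - (u - c₁) ^ 2) / (y₁ ^ 2 + (u - c₁) ^ 2))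
        - 2 * (c₂ - c₁) * y₁ * (2 * (u - c₁) * y₁ / (y₁ ^ 2 + (u - c₁) ^ 2))) =
      2 * ((c₂ - c₁) * (u - c₁) ^ 2 - (u - c₁) * ((c₂ - c₁) ^ 2 + (y₂ ^ 2 - y₁ ^ 2))
        - (c₂ - c₁) * y₁ ^ 2) ^ 2 / ((y₁ ^ 2 + (u - c₁) ^ 2) * (y₂ ^ 2 + (u - c₂) ^ 2)) := by
    have e1' := e1.ne'
    have e2' := e2.ne'
    field_simp
    ring
  rw [key]
  positivity

/-- Horizontal extent of the chain with edge lengths `ℓ` and half-angle tangents `(u i - c) / y`. -/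
def chainX (ℓ u : ℕ → ℝ) (c y : ℝ) (j : ℕ) : ℝ :=
  ∑ i ∈ Finset.range j, ℓ i * hcos ((u i - c) / y)

/-- Vertical extent of the chain with edge lengths `ℓ` and half-angle tangents `(u i - c) / y`. -/
def chainY (ℓ u : ℕ → ℝ) (c y : ℝ) (j : ℕ) : ℝ :=
  ∑ i ∈ Finset.range j, ℓ i * hsin ((u i - c) / y)

theorem chain_derivative_monotone {ℓ : ℕ → ℝ} (u : ℕ → ℝ) {k : ℕ} (hℓ : ∀ i < k, 0 < ℓ i)
    (c₁ c₂ : ℝ) {y₁ y₂ : ℝ} (h₁ : 0 < y₁) (h₂ : 0 < y₂) :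
    ((c₂ - c₁) ^ 2 + (y₂ ^ 2 - y₁ ^ 2)) * chainX ℓ u c₁ y₁ k
        - 2 * (c₂ - c₁) * y₁ * chainY ℓ u c₁ y₁ k ≤
      ((y₂ ^ 2 - y₁ ^ 2) - (c₂ - c₁) ^ 2) * chainX ℓ u c₂ y₂ k
        - 2 * (c₂ - c₁) * y₂ * chainY ℓ u c₂ y₂ k := by
  unfold chainX chainY
  simp only [Finset.mul_sum, ← Finset.sum_sub_distrib]
  refine Finset.sum_le_sum fun i hi => ?_
  have := mul_le_mul_of_nonneg_left (busemann_derivative_monotone (u i) c₁ c₂ h₁ h₂)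
    (hℓ i (Finset.mem_range.1 hi)).le
  linarith

theorem exists_closing_shift {ℓ u : ℕ → ℝ} {k : ℕ} (hℓ : ∀ i < k, 0 < ℓ i)
    (h0 : chainY ℓ u 0 1 k = 0) (hd : 0 < chainX ℓ u 0 1 k) {y : ℝ} (hy : 1 ≤ y) :
    ∃ c, chainY ℓ u c y k = 0 ∧ chainX ℓ u 0 1 k ≤ chainX ℓ u c y k := by
  rcases hy.eq_or_lt with rfl | hy1
  · exact ⟨0, h0, le_rfl⟩
  have hy0 : 0 < y := by linarith
  have key := fun c => chain_derivative_monotone u hℓ 0 c one_pos hy0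
  simp only [h0, sub_zero, mul_zero, one_pow] at key
  have hκ2 : 0 < y ^ 2 - 1 := by nlinarith
  set κ := Real.sqrt (y ^ 2 - 1) with hκ
  have hκ0 : 0 < κ := Real.sqrt_pos.2 hκ2
  have hκs : κ ^ 2 = y ^ 2 - 1 := Real.sq_sqrt hκ2.le
  have hcont : ContinuousOn (fun c => chainY ℓ u c y k) (Set.Icc (-κ) κ) := by
    apply Continuous.continuousOn
    unfold chainY
    refine continuous_finsetSum _ fun i _ => continuous_const.mul (continuous_hsin.comp ?_)
    fun_prop
  have hR : chainY ℓ u κ y k < 0 := by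
    have := key κ
    rw [hκs] at this
    have h3 : 0 < κ * y := by positivity
    by_contra hcon
    push Not at hcon
    nlinarith [mul_nonneg h3.le hcon, mul_pos hκ2 hd]
  have hL : 0 < chainY ℓ u (-κ) y k := by
    have := key (-κ)
    rw [neg_sq, hκs] at this
    have h3 : 0 < κ * y := by positivity
    by_contra hcon
    push Not at hcon
    nlinarith [mul_nonneg h3.le (neg_nonneg.2 hcon), mul_pos hκ2 hd]
  obtain ⟨c, hc, hc0⟩ := intermediate_value_Icc' (by linarith) hcont
    (Set.mem_Icc.2 ⟨hR.le, hL.le⟩)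
  refine ⟨c, hc0, ?_⟩
  have h := key c
  simp only at hc0
  rw [hc0, mul_zero, sub_zero] at h
  have hcκ : c ^ 2 ≤ y ^ 2 - 1 := by rw [← hκs]; exact sq_le_sq' hc.1 hc.2
  by_contra hcon
  push Not at hcon
  have : 0 < (c ^ 2 + (y ^ 2 - 1)) * chainX ℓ u 0 1 k := by positivity
  have h4 : 0 < y ^ 2 - 1 - c ^ 2 := by
    rcases (sub_nonneg.2 hcκ).eq_or_lt with h5 | h5
    · rw [← h5] at h; linarith
    · exact h5
  nlinarith [mul_pos h4 (sub_pos.2 hcon), mul_nonneg (sq_nonneg c) hd.le]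

/-- A chain closing up over a horizontal base can be flattened, by translations and dilations of the
half-angle tangents, so that it always closes up over a horizontal base and the base never gets
shorter than it was at first. -/
theorem exists_continuous_closing_shift {ℓ u : ℕ → ℝ} {k : ℕ} (hℓ : ∀ i < k, 0 < ℓ i)
    (h0 : chainY ℓ u 0 1 k = 0) (hd : 0 < chainX ℓ u 0 1 k) :
    ∃ c : ℝ → ℝ, ContinuousOn c (Set.Ici 1) ∧ c 1 = 0 ∧
      ∀ y, 1 ≤ y → chainY ℓ u (c y) y k = 0 ∧ chainX ℓ u 0 1 k ≤ chainX ℓ u (c y) y k := by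
  have hex := fun y (hy : 1 ≤ y) => exists_closing_shift hℓ h0 hd hy
  choose! c hc using hex
  have bound : ∀ y₁ y₂, 1 ≤ y₁ → y₁ ≤ y₂ → (c y₂ - c y₁) ^ 2 ≤ y₂ ^ 2 - y₁ ^ 2 := by
    intro y₁ y₂ h₁ h₂
    have h := chain_derivative_monotone u hℓ (c y₁) (c y₂) (by linarith : 0 < y₁)
      (by linarith : 0 < y₂)
    rw [(hc y₁ h₁).1, (hc y₂ (by linarith)).1] at h
    have d1 := (hc y₁ h₁).2
    have d2 := (hc y₂ (by linarith)).2
    have hκ : 0 ≤ y₂ ^ 2 - y₁ ^ 2 := by nlinarith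
    by_contra hcon
    push Not at hcon
    have p1 : 0 < ((c y₂ - c y₁) ^ 2 + (y₂ ^ 2 - y₁ ^ 2)) * chainX ℓ u (c y₁) y₁ k :=
      mul_pos (by linarith) (by linarith)
    have p2 : ((y₂ ^ 2 - y₁ ^ 2) - (c y₂ - c y₁) ^ 2) * chainX ℓ u (c y₂) y₂ k < 0 :=
      mul_neg_of_neg_of_pos (by linarith) (by linarith)
    linarith
  refine ⟨c, ?_, ?_, hc⟩
  · intro y hy
    have hb : ∀ z ∈ Set.Ici (1 : ℝ), ‖c z - c y‖ ≤ Real.sqrt |z ^ 2 - y ^ 2| := by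
      intro z hz
      rw [Real.norm_eq_abs]
      apply Real.abs_le_sqrt
      rcases le_total y z with h | h
      · exact (bound y z hy h).trans (le_abs_self _)
      · rw [← neg_sub (c y), neg_sq, abs_sub_comm]
        exact (bound z y hz h).trans (le_abs_self _)
    rw [ContinuousWithinAt, tendsto_iff_norm_sub_tendsto_zero]
    refine squeeze_zero' (Filter.Eventually.of_forall fun _ => norm_nonneg _)
      (Filter.eventually_of_mem self_mem_nhdsWithin hb) ?_
    have : Continuous fun z : ℝ => Real.sqrt |z ^ 2 - y ^ 2| := by fun_prop
    simpa using (this.tendsto y).mono_left nhdsWithin_le_nhds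
  · obtain ⟨e1, e2⟩ := hc 1 le_rfl
    have h := chain_derivative_monotone u hℓ 0 (c 1) one_pos one_pos
    rw [h0, e1] at h
    by_contra hne
    have : 0 < c 1 ^ 2 := by positivity
    nlinarith [mul_pos this hd]

theorem sum_range_lt_of_pos {s : ℕ → ℝ} {a b : ℕ} (hab : a < b) (h : ∀ m, a ≤ m → m < b → 0 < s m) :
    ∑ i ∈ Finset.range a, s i < ∑ i ∈ Finset.range b, s i := by
  rw [← Finset.sum_range_add_sum_Ico s hab.le]
  refine lt_add_of_pos_right _ (Finset.sum_pos (fun m hm => ?_) (Finset.nonempty_Ico.2 hab))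
  exact h m (Finset.mem_Ico.1 hm).1 (Finset.mem_Ico.1 hm).2

theorem sum_range_le_of_pos {s : ℕ → ℝ} {a b : ℕ} (hab : a ≤ b) (h : ∀ m, a ≤ m → m < b → 0 < s m) :
    ∑ i ∈ Finset.range a, s i ≤ ∑ i ∈ Finset.range b, s i := by
  rcases hab.eq_or_lt with rfl | hab
  · exact le_rfl
  · exact (sum_range_lt_of_pos hab h).le

theorem sum_range_lt_of_neg {s : ℕ → ℝ} {a b : ℕ} (hab : a < b) (h : ∀ m, a ≤ m → m < b → s m < 0) :
    ∑ i ∈ Finset.range b, s i < ∑ i ∈ Finset.range a, s i := by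
  have := sum_range_lt_of_pos (s := fun i => -s i) hab fun m h1 h2 => neg_pos.2 (h m h1 h2)
  simpa using this

theorem sum_range_le_of_neg {s : ℕ → ℝ} {a b : ℕ} (hab : a ≤ b) (h : ∀ m, a ≤ m → m < b → s m < 0) :
    ∑ i ∈ Finset.range b, s i ≤ ∑ i ∈ Finset.range a, s i := by
  rcases hab.eq_or_lt with rfl | hab
  · exact le_rfl
  · exact (sum_range_lt_of_neg hab h).le

section ConvexChain

variable {ℓ u : ℕ → ℝ} {k : ℕ}

theorem chain_first_neg (hk : 2 ≤ k) (hℓ : ∀ i < k, 0 < ℓ i)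
    (hu : ∀ i j, i < j → j < k → u i < u j)
    (h0 : ∑ i ∈ Finset.range k, ℓ i * hsin (u i) = 0) : u 0 < 0 := by
  by_contra hcon
  push Not at hcon
  have h1 : ∑ i ∈ Finset.range 1, ℓ i * hsin (u i) < ∑ i ∈ Finset.range k, ℓ i * hsin (u i) :=
    sum_range_lt_of_pos (by omega) fun m h1 h2 =>
      mul_pos (hℓ m h2) (hsin_pos (hcon.trans_lt (hu 0 m (by omega) h2)))
  have h2 : 0 ≤ ℓ 0 * hsin (u 0) :=
    mul_nonneg (hℓ 0 (by omega)).le (by unfold hsin; positivity)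
  simp at h1
  linarith

theorem chain_last_pos (hk : 2 ≤ k) (hℓ : ∀ i < k, 0 < ℓ i)
    (hu : ∀ i j, i < j → j < k → u i < u j)
    (h0 : ∑ i ∈ Finset.range k, ℓ i * hsin (u i) = 0) : 0 < u (k - 1) := by
  by_contra hcon
  push Not at hcon
  have h1 : ∑ i ∈ Finset.range (k - 1), ℓ i * hsin (u i) < ∑ i ∈ Finset.range 0, ℓ i * hsin (u i) :=
    sum_range_lt_of_neg (by omega) fun m h1 h2 => mul_neg_of_pos_of_neg (hℓ m (by omega))
      (hsin_neg ((hu m (k - 1) (by omega) (by omega)).trans_le hcon))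
  have h2 : ℓ (k - 1) * hsin (u (k - 1)) ≤ 0 := by
    refine mul_nonpos_of_nonneg_of_nonpos (hℓ _ (by omega)).le ?_
    unfold hsin
    exact div_nonpos_of_nonpos_of_nonneg (by linarith) (by positivity)
  obtain ⟨m, rfl⟩ : ∃ m, k = m + 1 := ⟨k - 1, by omega⟩
  rw [Finset.sum_range_succ] at h0
  simp at h1 h2
  linarith

theorem chain_below_base (hℓ : ∀ i < k, 0 < ℓ i)
    (hu : ∀ i j, i < j → j < k → u i < u j)
    (h0 : ∑ i ∈ Finset.range k, ℓ i * hsin (u i) = 0) {j : ℕ} (hj : 0 < j) (hjk : j < k) :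
    ∑ i ∈ Finset.range j, ℓ i * hsin (u i) < 0 := by
  rcases lt_or_ge (u (j - 1)) 0 with h | h
  · have := sum_range_lt_of_neg (s := fun i => ℓ i * hsin (u i)) hj fun m _ h2 => by
      refine mul_neg_of_pos_of_neg (hℓ m (by omega)) (hsin_neg (lt_of_le_of_lt ?_ h))
      rcases (show m ≤ j - 1 by omega).eq_or_lt with h3 | h3
      · rw [h3]
      · exact (hu m (j - 1) h3 (by omega)).le
    simpa using this
  · rw [← h0]
    exact sum_range_lt_of_pos hjk fun m h1 h2 =>
      mul_pos (hℓ m h2) (hsin_pos (h.trans_lt (hu (j - 1) m (by omega) h2)))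

/-- A chain with increasing edge directions closing up over a horizontal base lies strictly to the
left of each of its edges. -/
theorem chain_left_of_edge (hℓ : ∀ i < k, 0 < ℓ i)
    (hu : ∀ i j, i < j → j < k → u i < u j)
    (h0 : ∑ i ∈ Finset.range k, ℓ i * hsin (u i) = 0)
    (hd : 0 < ∑ i ∈ Finset.range k, ℓ i * hcos (u i)) {i j : ℕ} (hi : i < k) (hj : j ≤ k)
    (hji : j ≠ i) (hji1 : j ≠ i + 1) :
    0 < hcos (u i) *
          (∑ m ∈ Finset.range j, ℓ m * hsin (u m) - ∑ m ∈ Finset.range i, ℓ m * hsin (u m)) -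
        hsin (u i) *
          (∑ m ∈ Finset.range j, ℓ m * hcos (u m) - ∑ m ∈ Finset.range i, ℓ m * hcos (u m)) := by
  set s : ℕ → ℝ := fun m => ℓ m * (hcos (u i) * hsin (u m) - hsin (u i) * hcos (u m)) with hs
  have hT : ∀ j, ∑ m ∈ Finset.range j, s m =
      hcos (u i) * ∑ m ∈ Finset.range j, ℓ m * hsin (u m) -
        hsin (u i) * ∑ m ∈ Finset.range j, ℓ m * hcos (u m) := by
    intro j
    simp only [Finset.mul_sum, ← Finset.sum_sub_distrib, hs]
    exact Finset.sum_congr rfl fun m _ => by ring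
  suffices h : ∑ m ∈ Finset.range i, s m < ∑ m ∈ Finset.range j, s m by
    rw [hT, hT] at h
    linarith
  have hTk : ∑ m ∈ Finset.range k, s m =
      -(hsin (u i) * ∑ m ∈ Finset.range k, ℓ m * hcos (u m)) := by
    rw [hT, h0]; ring
  have hTi : ∑ m ∈ Finset.range (i + 1), s m = ∑ m ∈ Finset.range i, s m := by
    rw [Finset.sum_range_succ]
    simp only [hs]
    ring
  have spos : ∀ m < k, 0 < (u m - u i) * (1 + u i * u m) → 0 < s m := by
    intro m hm h
    simp only [hs, hcos_mul_hsin_sub]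
    refine mul_pos (hℓ m hm) (div_pos (by linarith) (by positivity))
  have sneg : ∀ m < k, (u m - u i) * (1 + u i * u m) < 0 → s m < 0 := by
    intro m hm h
    simp only [hs, hcos_mul_hsin_sub]
    exact mul_neg_of_pos_of_neg (hℓ m hm) (div_neg_of_neg_of_pos (by linarith) (by positivity))
  have hpos : ∀ m, i < m → m < k → 0 < 1 + u i * u m → 0 < s m := fun m h1 h2 h3 =>
    spos m h2 (mul_pos (sub_pos.2 (hu i m h1 h2)) h3)
  have hneg : ∀ m, m < i → 0 < 1 + u i * u m → s m < 0 := fun m h1 h3 =>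
    sneg m (h1.trans hi) (mul_neg_of_neg_of_pos (sub_neg.2 (hu m i h1 hi)) h3)
  rcases le_or_gt 0 (u i) with hui | hui
  · have hright : ∀ m, i + 1 ≤ m → m < k → 0 < s m := by
      intro m h1 h2
      refine hpos m h1 h2 ?_
      have := mul_nonneg hui (hui.trans (hu i m h1 h2).le)
      linarith
    rcases lt_or_gt_of_ne hji with hlt | hgt
    · rcases lt_or_ge 0 (1 + u i * u j) with hj1 | hj1
      · refine sum_range_lt_of_neg hlt fun m h1 h2 => hneg m h2 ?_
        rcases h1.eq_or_lt with rfl | h1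
        · exact hj1
        · nlinarith [mul_nonneg hui (sub_pos.2 (hu j m h1 (h2.trans hi))).le]
      · have hui' : 0 < u i := by
          rcases hui.eq_or_lt with h | h
          · rw [← h] at hj1; linarith
          · exact h
        have e1 := sum_range_le_of_pos (s := s) (Nat.zero_le j) fun m _ h2 => by
          refine spos m (by omega) (mul_pos_of_neg_of_neg (sub_neg.2 (hu m i (by omega) hi)) ?_)
          nlinarith [mul_pos hui' (sub_pos.2 (hu m j h2 (by omega)))]
        have e2 := sum_range_le_of_pos (s := s) (show i + 1 ≤ k from hi) hright
        have e3 := mul_pos (hsin_pos hui') hd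
        rw [hTi, hTk] at e2
        simp only [Finset.range_zero, Finset.sum_empty] at e1
        linarith
    · rw [← hTi]
      exact sum_range_lt_of_pos (by omega) fun m h1 h2 => hright m h1 (by omega)
  · have hleft : ∀ m, 0 ≤ m → m < i → s m < 0 := by
      intro m _ h2
      refine hneg m h2 ?_
      have := mul_pos_of_neg_of_neg hui ((hu m i h2 hi).trans hui)
      linarith
    rcases lt_or_gt_of_ne hji with hlt | hgt
    · exact sum_range_lt_of_neg hlt fun m _ h2 => hleft m (Nat.zero_le m) h2
    · rcases lt_or_ge 0 (1 + u i * u (j - 1)) with hj1 | hj1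
      · rw [← hTi]
        refine sum_range_lt_of_pos (by omega) fun m h1 h2 => hpos m h1 (by omega) ?_
        rcases (show m ≤ j - 1 by omega).eq_or_lt with rfl | h3
        · exact hj1
        · nlinarith [mul_pos_of_neg_of_neg hui (sub_neg.2 (hu m (j - 1) h3 (by omega)))]
      · have e1 := sum_range_le_of_neg (s := s) hj fun m h1 h2 => by
          refine sneg m h2 (mul_neg_of_pos_of_neg (sub_pos.2 (hu i m (by omega) h2)) ?_)
          nlinarith [mul_pos_of_neg_of_neg hui (sub_neg.2 (hu (j - 1) m (by omega) h2))]
        have e2 := sum_range_le_of_neg (s := s) (Nat.zero_le i) hleft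
        have e3 := mul_neg_of_neg_of_pos (hsin_neg hui) hd
        rw [hTk] at e1
        simp only [Finset.range_zero, Finset.sum_empty] at e2
        linarith

end ConvexChain

/-- The cross product of two plane vectors, as a linear form in the second one. -/
def planeCross (a : E2) : E2 →ₗ[ℝ] ℝ where
  toFun b := a 0 * b 1 - a 1 * b 0
  map_add' b c := by simp; ring
  map_smul' r b := by simp; ring

theorem planeCross_apply (a b : E2) : planeCross a b = a 0 * b 1 - a 1 * b 0 := rfl

theorem planeCross_self (a : E2) : planeCross a a = 0 := by rw [planeCross_apply]; ring

/-- The second coordinate, as a linear form. -/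
def planeHeight : E2 →ₗ[ℝ] ℝ where
  toFun b := b 1
  map_add' _ _ := rfl
  map_smul' _ _ := rfl

theorem le_of_mem_segment (L : E2 →ₗ[ℝ] ℝ) {x y z : E2} {c : ℝ} (hz : z ∈ segment ℝ x y)
    (hx : L x ≤ c) (hy : L y ≤ c) : L z ≤ c := by
  obtain ⟨a, b, ha, hb, hab, rfl⟩ := hz
  rw [map_add, map_smul, map_smul, smul_eq_mul, smul_eq_mul]
  obtain rfl : b = 1 - a := by linarith
  nlinarith

theorem eq_left_of_mem_segment (L : E2 →ₗ[ℝ] ℝ) {x y z : E2} {c : ℝ} (hz : z ∈ segment ℝ x y)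
    (hx : c ≤ L x) (hy : c < L y) (hzc : L z ≤ c) : z = x ∧ L x = c := by
  obtain ⟨a, b, ha, hb, hab, rfl⟩ := hz
  rw [map_add, map_smul, map_smul, smul_eq_mul, smul_eq_mul] at hzc
  obtain rfl : a = 1 - b := by linarith
  obtain rfl : b = 0 := by nlinarith
  simp only [sub_zero, one_smul, zero_smul, add_zero, true_and]
  linarith

theorem eq_right_of_mem_segment (L : E2 →ₗ[ℝ] ℝ) {x y z : E2} {c : ℝ} (hz : z ∈ segment ℝ x y)
    (hx : c < L x) (hy : c ≤ L y) (hzc : L z ≤ c) : z = y ∧ L y = c :=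
  eq_left_of_mem_segment L (segment_symm ℝ x y ▸ hz) hy hx hzc

theorem isSimplePolygon_of_forall_mem {n : ℕ} {v : ℕ → E2} (hn : 3 ≤ n)
    (hne : ∀ i j, i < j → j < n → v i ≠ v j)
    (h : ∀ i j z, i < j → j < n → z ∈ segment ℝ (v i) (v ((i + 1) % n)) →
      z ∈ segment ℝ (v j) (v ((j + 1) % n)) →
      (i + 1 = j ∧ z = v j) ∨ (i = 0 ∧ j = n - 1 ∧ z = v 0)) :
    IsSimplePolygon n v := by
  refine ⟨hn, fun i j hi hj hij => ?_, fun i j hij hj => ?_⟩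
  · rcases lt_or_gt_of_ne hij with h' | h'
    · exact hne i j h' hj
    · exact (hne j i h' hi).symm
  · split_ifs with h1 h2
    · ext z
      constructor
      · rintro ⟨hz1, hz2⟩
        rcases h i j z hij hj hz1 hz2 with h3 | h3
        · exact h3.2
        · omega
      · rintro rfl
        subst h1
        rw [Nat.mod_eq_of_lt hj]
        exact ⟨right_mem_segment _ _ _, left_mem_segment _ _ _⟩
    · obtain ⟨rfl, rfl⟩ := h2
      ext z
      constructor
      · rintro ⟨hz1, hz2⟩
        rcases h _ _ z hij hj hz1 hz2 with h3 | h3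
        · omega
        · exact h3.2.2
      · rintro rfl
        rw [Nat.sub_add_cancel (by omega), Nat.mod_self]
        exact ⟨left_mem_segment _ _ _, right_mem_segment _ _ _⟩
    · ext z
      simp only [Set.mem_inter_iff, Set.mem_empty_iff_false, iff_false]
      rintro ⟨hz1, hz2⟩
      rcases h i j z hij hj hz1 hz2 with h3 | h3
      · exact h1 h3.1
      · exact h2 ⟨h3.1, h3.2.1⟩

theorem isConvexPolygonConfig_of_support {n : ℕ} {w : ℕ → E2} (hn : 3 ≤ n)
    (h : ∀ i, i < n → ∃ f : E2 →ₗ[ℝ] ℝ, f (w i) = f (w ((i + 1) % n)) ∧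
      ∀ j, j < n → j ≠ i → j ≠ (i + 1) % n → f (w j) < f (w i)) :
    IsConvexPolygonConfig n w := by
  refine ⟨fun i hi hmem => ?_, h⟩
  obtain ⟨q, hq, hqi, hqn⟩ : ∃ q, q < n ∧ (q + 1) % n = i ∧ q ≠ (i + 1) % n := by
    rcases Nat.eq_zero_or_pos i with rfl | h0
    · refine ⟨n - 1, by omega, by rw [Nat.sub_add_cancel (by omega), Nat.mod_self], ?_⟩
      rw [Nat.mod_eq_of_lt (by omega)]
      omega
    · refine ⟨i - 1, by omega, by rw [Nat.sub_add_cancel h0, Nat.mod_eq_of_lt hi], ?_⟩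
      rcases (show i + 1 ≤ n from hi).eq_or_lt with h1 | h1
      · rw [h1, Nat.mod_self]; omega
      · rw [Nat.mod_eq_of_lt h1]; omega
  obtain ⟨f, hf1, hf2⟩ := h i hi
  obtain ⟨g, hg1, hg2⟩ := h q hq
  rw [hqi] at hg1 hg2
  have hsub : convexHull ℝ {x | ∃ j, j < n ∧ j ≠ i ∧ x = w j} ⊆
      {z | (f + g) z < (f + g) (w i)} := by
    refine convexHull_min ?_ (convex_halfSpace_lt (f + g).isLinear _)
    rintro _ ⟨j, hj, hji, rfl⟩
    simp only [Set.mem_ofPred_eq, LinearMap.add_apply]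
    by_cases hjn : j = (i + 1) % n
    · have := hg2 j hj (fun h => hqn (h ▸ hjn)) hji
      rw [hjn] at this ⊢
      linarith
    · have h1 := hf2 j hj hji hjn
      by_cases hjq : j = q
      · rw [hjq] at h1 ⊢; linarith
      · have := hg2 j hj hjq hji
        linarith
  have := hsub hmem
  simp only [Set.mem_ofPred_eq, lt_self_iff_false] at this

theorem isConvexPolygonConfig_of_left {n : ℕ} {w : ℕ → E2} (hn : 3 ≤ n)
    (h : ∀ i j, i < n → j < n → j ≠ i → j ≠ (i + 1) % n →
      0 < planeCross (w ((i + 1) % n) - w i) (w j - w i)) :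
    IsConvexPolygonConfig n w := by
  refine isConvexPolygonConfig_of_support hn fun i hi =>
    ⟨-planeCross (w ((i + 1) % n) - w i), ?_, fun j hj h1 h2 => ?_⟩
  · have := planeCross_self (w ((i + 1) % n) - w i)
    rw [map_sub] at this
    simp only [LinearMap.neg_apply]
    linarith
  · have := h i j hi hj h1 h2
    rw [map_sub] at this
    simp only [LinearMap.neg_apply]
    linarith

/-- The vertices `p 0, …, p k` form a convex chain below its horizontal base `[p 0, p k]`, traversed
counterclockwise, and the vertex `p (k + 1)` lies above the base. -/
structure IsCappedChain (k : ℕ) (p : ℕ → E2) : Prop where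
  two_le : 2 ≤ k
  first_fst : p 0 0 = 0
  first_snd : p 0 1 = 0
  last_fst : 0 < p k 0
  last_snd : p k 1 = 0
  below : ∀ j, 0 < j → j < k → p j 1 < 0
  left : ∀ i j, i < k → j ≤ k → j ≠ i → j ≠ i + 1 → 0 < planeCross (p (i + 1) - p i) (p j - p i)
  above : 0 < p (k + 1) 1

namespace IsCappedChain

variable {k : ℕ} {p : ℕ → E2}

theorem snd_nonpos (h : IsCappedChain k p) {j : ℕ} (hj : j ≤ k) : p j 1 ≤ 0 := by
  rcases Nat.eq_zero_or_pos j with rfl | h0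
  · exact h.first_snd.le
  rcases hj.eq_or_lt with rfl | h1
  · exact h.last_snd.le
  · exact (h.below j h0 h1).le

theorem ne (h : IsCappedChain k p) {i j : ℕ} (hij : i < j) (hj : j < k + 2) : p i ≠ p j := by
  intro heq
  have h2 := h.two_le
  rcases (show j ≤ k + 1 by omega).eq_or_lt with rfl | hj'
  · have h3 := h.snd_nonpos (show i ≤ k by omega)
    rw [heq] at h3
    exact absurd h.above (not_lt.2 h3)
  by_cases hji : j = i + 1
  · subst hji
    obtain ⟨m, hm, hmi, hmi1⟩ : ∃ m, m ≤ k ∧ m ≠ i ∧ m ≠ i + 1 := by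
      rcases Nat.eq_zero_or_pos i with rfl | h0
      · exact ⟨2, h2, by omega, by omega⟩
      · exact ⟨0, by omega, by omega, by omega⟩
    have := h.left i m (by omega) hm hmi hmi1
    rw [← heq, sub_self, planeCross_apply] at this
    simp at this
  · have := h.left i j (by omega) (by omega) (by omega) hji
    rw [← heq, sub_self, map_zero] at this
    exact lt_irrefl _ this

theorem isSimplePolygon (h : IsCappedChain k p) : IsSimplePolygon (k + 2) p := by
  have h2 := h.two_le
  have hlast : p 0 ≠ p k := h.ne (by omega) (by omega)
  have mod1 : ∀ i, i < k + 1 → (i + 1) % (k + 2) = i + 1 := fun i hi => Nat.mod_eq_of_lt (by omega)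
  have hlow : ∀ i z, i < k → z ∈ segment ℝ (p i) (p (i + 1)) → z 1 ≤ 0 := fun i z hi hz =>
    le_of_mem_segment planeHeight hz (h.snd_nonpos hi.le) (h.snd_nonpos hi)
  refine isSimplePolygon_of_forall_mem (by omega) (fun i j hij hj => h.ne hij hj) ?_
  intro i j z hij hj hzi hzj
  rw [mod1 i (by omega)] at hzi
  rcases (show j ≤ k + 1 by omega).eq_or_lt with rfl | hj1
  · rw [Nat.mod_self] at hzj
    rcases (show i ≤ k by omega).eq_or_lt with rfl | hik
    · left
      refine ⟨rfl, ?_⟩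
      have hc : ∀ y, planeCross (p (i + 1) - p i) y = planeCross (p (i + 1) - p i) (p i) +
          planeCross (p (i + 1) - p i) (y - p i) := fun y => by rw [map_sub]; ring
      refine (eq_left_of_mem_segment (planeCross (p (i + 1) - p i))
        (c := planeCross (p (i + 1) - p i) (p i)) hzj ?_ ?_ ?_).1
      · rw [hc (p (i + 1)), planeCross_self, add_zero]
      · rw [hc (p 0), lt_add_iff_pos_right, planeCross_apply]
        simp only [PiLp.sub_apply, h.first_fst, h.first_snd, h.last_snd]
        nlinarith [mul_pos h.above h.last_fst]
      · refine le_of_mem_segment _ hzi le_rfl ?_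
        rw [hc (p (i + 1)), planeCross_self, add_zero]
    · have hz0 : z = p 0 := (eq_right_of_mem_segment planeHeight hzj h.above h.first_snd.ge
        (hlow i z hik hzi)).1
      rcases Nat.eq_zero_or_pos i with rfl | h0
      · exact Or.inr ⟨rfl, by omega, hz0⟩
      · exfalso
        have hz1 := eq_right_of_mem_segment (-planeHeight) (c := 0) hzi
          (neg_pos.2 (h.below i h0 hik)) (neg_nonneg.2 (h.snd_nonpos hik))
          (by rw [hz0]; exact (neg_eq_zero.2 h.first_snd).le)
        have hik' : i + 1 = k := by
          by_contra hne
          exact (h.below (i + 1) (by omega) (by omega)).ne (neg_eq_zero.1 hz1.2)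
        rw [hik'] at hz1
        exact hlast (hz0 ▸ hz1.1)
  rw [mod1 j hj1] at hzj
  rcases (show j ≤ k by omega).eq_or_lt with rfl | hjk
  · have hz0 : z = p j := (eq_left_of_mem_segment planeHeight hzj h.last_snd.ge h.above
      (hlow i z hij hzi)).1
    left
    refine ⟨?_, hz0⟩
    by_contra hne
    have hz1 := eq_left_of_mem_segment (-planeHeight) (c := 0) hzi
      (neg_nonneg.2 (h.snd_nonpos hij.le)) (neg_pos.2 (h.below (i + 1) (by omega) (by omega)))
      (by rw [hz0]; exact (neg_eq_zero.2 h.last_snd).le)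
    have hi0 : i = 0 := by
      by_contra hi
      exact (h.below i (by omega) hij).ne (neg_eq_zero.1 hz1.2)
    rw [hi0] at hz1
    exact hlast (hz0 ▸ hz1.1.symm)
  · have hc : ∀ y, planeCross (p (i + 1) - p i) y = planeCross (p (i + 1) - p i) (p i) +
        planeCross (p (i + 1) - p i) (y - p i) := fun y => by rw [map_sub]; ring
    have hle : planeCross (p (i + 1) - p i) z ≤ planeCross (p (i + 1) - p i) (p i) := by
      refine le_of_mem_segment _ hzi le_rfl ?_
      rw [hc (p (i + 1)), planeCross_self, add_zero]
    have hpos1 : planeCross (p (i + 1) - p i) (p i) < planeCross (p (i + 1) - p i) (p (j + 1)) := by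
      rw [hc (p (j + 1)), lt_add_iff_pos_right]
      exact h.left i (j + 1) (by omega) (by omega) (by omega) (by omega)
    left
    by_cases hji : j = i + 1
    · refine ⟨hji.symm, (eq_left_of_mem_segment _ hzj ?_ hpos1 hle).1⟩
      rw [hji, hc (p (i + 1)), planeCross_self, add_zero]
    · exfalso
      have hpos2 : planeCross (p (i + 1) - p i) (p i) < planeCross (p (i + 1) - p i) (p j) := by
        rw [hc (p j), lt_add_iff_pos_right]
        exact h.left i j (by omega) (by omega) (by omega) hji
      exact hpos2.ne' (eq_left_of_mem_segment _ hzj hpos2.le hpos1 hle).2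

theorem isConvexPolygonConfig (h : IsCappedChain k p)
    (hcap : ∀ i < k, 0 < planeCross (p (i + 1) - p i) (p (k + 1) - p i)) :
    IsConvexPolygonConfig (k + 2) p := by
  have h2 := h.two_le
  refine isConvexPolygonConfig_of_left (by omega) fun i j hi hj hji hjs => ?_
  rcases (show i ≤ k + 1 by omega).eq_or_lt with rfl | hi1
  · rw [Nat.mod_self] at hjs ⊢
    have a1 : 0 ≤ planeCross (p 1 - p 0) (p j - p 0) := by
      by_cases hj1 : j = 1
      · rw [hj1, planeCross_self]
      · exact (h.left 0 j (by omega) (by omega) hjs hj1).le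
    have a2 := hcap 0 (by omega)
    have a3 := h.below 1 one_pos (by omega)
    have a4 := h.snd_nonpos (show j ≤ k by omega)
    have a5 := h.above
    have a6 : j ≠ 1 → 0 < planeCross (p 1 - p 0) (p j - p 0) := fun hj1 =>
      h.left 0 j (by omega) (by omega) hjs hj1
    have a7 : j = 1 → p j 1 < 0 := fun hj1 => hj1 ▸ a3
    rw [zero_add] at a2
    simp only [planeCross_apply, PiLp.sub_apply, h.first_fst, h.first_snd, sub_zero] at *
    have key : -(p 1 1) * ((0 - p (k + 1) 0) * (p j 1 - p (k + 1) 1)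
        - (0 - p (k + 1) 1) * (p j 0 - p (k + 1) 0)) =
        (p 1 0 * p j 1 - p 1 1 * p j 0) * p (k + 1) 1 +
        (p 1 0 * p (k + 1) 1 - p 1 1 * p (k + 1) 0) * (-(p j 1)) := by ring
    refine pos_of_mul_pos_right (a := -(p 1 1)) ?_ (by linarith)
    rw [key]
    by_cases hj1 : j = 1
    · have := mul_pos a2 (neg_pos.2 (a7 hj1))
      have := mul_nonneg a1 a5.le
      linarith
    · have := mul_nonneg a2.le (neg_nonneg.2 a4)
      have := mul_pos (a6 hj1) a5
      linarith
  rw [Nat.mod_eq_of_lt (by omega)] at hjs ⊢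
  rcases (show i ≤ k by omega).eq_or_lt with rfl | hik
  · obtain ⟨m, rfl⟩ : ∃ m, i = m + 1 := ⟨i - 1, by omega⟩
    have a2 := hcap m (by omega)
    have a3 := h.below m (by omega) (by omega)
    have a4 := h.snd_nonpos (show j ≤ m + 1 by omega)
    have a5 := h.above
    have a6 : j ≠ m → 0 < planeCross (p (m + 1) - p m) (p j - p m) := fun hj1 =>
      h.left m j (by omega) (by omega) hj1 hji
    have a7 : j = m → p j 1 < 0 := fun hj1 => hj1 ▸ a3
    have a1 : 0 ≤ planeCross (p (m + 1) - p m) (p j - p m) := by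
      by_cases hj1 : j = m
      · rw [hj1, sub_self, map_zero]
      · exact (a6 hj1).le
    have a8 := h.last_snd
    simp only [planeCross_apply, PiLp.sub_apply, a8, sub_zero, zero_sub] at *
    refine pos_of_mul_pos_right (a := -(p m 1)) ?_ (by linarith)
    have key : -(p m 1) * ((p (m + 1 + 1) 0 - p (m + 1) 0) * p j 1
        - p (m + 1 + 1) 1 * (p j 0 - p (m + 1) 0)) =
        ((p (m + 1) 0 - p m 0) * (p j 1 - p m 1) - -p m 1 * (p j 0 - p m 0)) * p (m + 1 + 1) 1 +
        ((p (m + 1) 0 - p m 0) * (p (m + 1 + 1) 1 - p m 1)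
          - -p m 1 * (p (m + 1 + 1) 0 - p m 0)) * (-(p j 1)) := by ring
    rw [key]
    by_cases hj1 : j = m
    · have := mul_pos a2 (neg_pos.2 (a7 hj1))
      have := mul_nonneg a1 a5.le
      linarith
    · have := mul_nonneg a2.le (neg_nonneg.2 a4)
      have := mul_pos (a6 hj1) a5
      linarith
  · rcases (show j ≤ k + 1 by omega).eq_or_lt with rfl | hjk
    · exact hcap i hik
    · exact h.left i j hik (by omega) hji hjs

end IsCappedChain

/-- First coordinate of the apex of the triangle with base from `(0, 0)` to `(d, 0)` and distances
`r₁`, `r₂` from the apex to the ends of the base. -/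
def apexX (r₁ r₂ d : ℝ) : ℝ := (d ^ 2 + r₁ ^ 2 - r₂ ^ 2) / (2 * d)

/-- Second coordinate of the apex of the triangle with base from `(0, 0)` to `(d, 0)` and distances
`r₁`, `r₂` from the apex to the ends of the base. -/
def apexY (r₁ r₂ d : ℝ) : ℝ := Real.sqrt (r₁ ^ 2 - apexX r₁ r₂ d ^ 2)

section Apex

variable {r₁ r₂ d : ℝ}

theorem four_mul_sq_mul_apex (hd : 0 < d) :
    4 * d ^ 2 * (r₁ ^ 2 - apexX r₁ r₂ d ^ 2) =
      ((r₁ + r₂) ^ 2 - d ^ 2) * (d ^ 2 - (r₁ - r₂) ^ 2) := by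
  unfold apexX
  field_simp
  ring

theorem apex_sq_pos (hd : 0 < d) (h1 : r₁ - r₂ < d) (h2 : r₂ - r₁ < d) (h3 : d < r₁ + r₂) :
    0 < r₁ ^ 2 - apexX r₁ r₂ d ^ 2 := by
  have h := four_mul_sq_mul_apex (r₁ := r₁) (r₂ := r₂) hd
  have : 0 < ((r₁ + r₂) ^ 2 - d ^ 2) * (d ^ 2 - (r₁ - r₂) ^ 2) :=
    mul_pos (by nlinarith) (by nlinarith)
  rw [← h] at this
  exact pos_of_mul_pos_right this (by positivity)

theorem apexY_eq_zero (hd : 0 < d) (h1 : r₁ - r₂ < d) (h2 : r₂ - r₁ < d) (hr₁ : 0 ≤ r₁)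
    (h3 : r₁ + r₂ ≤ d) : apexY r₁ r₂ d = 0 := by
  have h := four_mul_sq_mul_apex (r₁ := r₁) (r₂ := r₂) hd
  have : ((r₁ + r₂) ^ 2 - d ^ 2) * (d ^ 2 - (r₁ - r₂) ^ 2) ≤ 0 :=
    mul_nonpos_of_nonpos_of_nonneg (by nlinarith) (by nlinarith)
  rw [← h] at this
  exact Real.sqrt_eq_zero_of_nonpos (nonpos_of_mul_nonpos_right this (by positivity))

theorem add_apexX (hd : 0 < d) : r₁ + apexX r₁ r₂ d = ((d + r₁) ^ 2 - r₂ ^ 2) / (2 * d) := by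
  unfold apexX
  field_simp
  ring

theorem add_sub_apexX (hd : 0 < d) :
    r₂ + (d - apexX r₁ r₂ d) = ((d + r₂) ^ 2 - r₁ ^ 2) / (2 * d) := by
  unfold apexX
  field_simp
  ring

theorem apexY_nonneg : 0 ≤ apexY r₁ r₂ d := Real.sqrt_nonneg _

theorem apexY_le (hr₁ : 0 ≤ r₁) : apexY r₁ r₂ d ≤ r₁ := by
  unfold apexY
  rw [Real.sqrt_le_left hr₁]
  nlinarith [sq_nonneg (apexX r₁ r₂ d)]

/-- When the base of a capped chain grows or the chain flattens, the cap eventually turns convexly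
into the chain at both ends of the base, before the cap is fully stretched. -/
theorem exists_time_apex_convex {D a b : ℝ → ℝ} {L B : ℝ} (hD : ContinuousOn D (Set.Ici 1))
    (ha : ContinuousOn a (Set.Ici 1)) (hb : ContinuousOn b (Set.Ici 1))
    (hr₁ : 0 ≤ r₁) (hr₂ : 0 ≤ r₂) (hd0 : 0 < D 1) (hDm : ∀ y, 1 ≤ y → D 1 ≤ D y)
    (hDL : ∀ y, 1 ≤ y → D y ≤ L) (hB : 0 ≤ B) (haB : ∀ y, 1 ≤ y → |a y| ≤ B / y)
    (hbB : ∀ y, 1 ≤ y → |b y| ≤ B / y)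
    (h1 : r₁ - r₂ < D 1) (h2 : r₂ - r₁ < D 1) (h3 : D 1 < r₁ + r₂) :
    ∃ y₁, 1 ≤ y₁ ∧ (∀ y, 1 ≤ y → y ≤ y₁ → D y < r₁ + r₂) ∧
      0 < r₁ + apexX r₁ r₂ (D y₁) + a y₁ * apexY r₁ r₂ (D y₁) ∧
      0 < r₂ + (D y₁ - apexX r₁ r₂ (D y₁)) - b y₁ * apexY r₁ r₂ (D y₁) := by
  have hDpos : ∀ y, 1 ≤ y → 0 < D y := fun y hy => hd0.trans_le (hDm y hy)
  have hq₁ : 0 < (D 1 + r₁) ^ 2 - r₂ ^ 2 := by nlinarith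
  have hq₂ : 0 < (D 1 + r₂) ^ 2 - r₁ ^ 2 := by nlinarith
  by_cases hA : ∀ y, 1 ≤ y → D y < r₁ + r₂
  · have hL : 0 < L := hd0.trans_le (hDL 1 le_rfl)
    set ε₁ := ((D 1 + r₁) ^ 2 - r₂ ^ 2) / (2 * L) with hε₁
    set ε₂ := ((D 1 + r₂) ^ 2 - r₁ ^ 2) / (2 * L) with hε₂
    have e₁ : 0 < ε₁ := by positivity
    have e₂ : 0 < ε₂ := by positivity
    set y := 1 + B * r₁ / ε₁ + B * r₁ / ε₂ with hy
    have hp₁ : 0 ≤ B * r₁ / ε₁ := by positivity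
    have hp₂ : 0 ≤ B * r₁ / ε₂ := by positivity
    have hy1 : 1 ≤ y := by linarith
    have hy0 : 0 < y := by linarith
    have small : ∀ s, |s| ≤ B / y → |s * apexY r₁ r₂ (D y)| ≤ B * r₁ / y := by
      intro s hs
      rw [abs_mul, abs_of_nonneg apexY_nonneg, mul_div_right_comm]
      exact mul_le_mul hs (apexY_le hr₁) apexY_nonneg (by positivity)
    have lt₁ : B * r₁ / y < ε₁ := by
      rw [div_lt_iff₀ hy0, mul_comm ε₁, ← div_lt_iff₀ e₁]; linarith
    have lt₂ : B * r₁ / y < ε₂ := by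
      rw [div_lt_iff₀ hy0, mul_comm ε₂, ← div_lt_iff₀ e₂]; linarith
    have m := hDm y hy1
    refine ⟨y, hy1, fun z hz _ => hA z hz, ?_, ?_⟩
    · have : ε₁ ≤ r₁ + apexX r₁ r₂ (D y) := by
        rw [add_apexX (hDpos y hy1)]
        exact div_le_div₀ (by nlinarith) (by nlinarith) (by linarith [hDpos y hy1])
          (by linarith [hDL y hy1])
      have := neg_abs_le (a y * apexY r₁ r₂ (D y))
      linarith [small _ (haB y hy1)]
    · have : ε₂ ≤ r₂ + (D y - apexX r₁ r₂ (D y)) := by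
        rw [add_sub_apexX (hDpos y hy1)]
        exact div_le_div₀ (by nlinarith) (by nlinarith) (by linarith [hDpos y hy1])
          (by linarith [hDL y hy1])
      have := le_abs_self (b y * apexY r₁ r₂ (D y))
      linarith [small _ (hbB y hy1)]
  · push Not at hA
    obtain ⟨Y, hY1, hY⟩ := hA
    have hcl : IsClosed (Set.Icc 1 Y ∩ D ⁻¹' Set.Ici (r₁ + r₂)) :=
      (hD.mono Set.Icc_subset_Ici_self).preimage_isClosed_of_isClosed isClosed_Icc isClosed_Ici
    have hcpt : IsCompact (Set.Icc 1 Y ∩ D ⁻¹' Set.Ici (r₁ + r₂)) :=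
      isCompact_Icc.of_isClosed_subset hcl Set.inter_subset_left
    obtain ⟨z, ⟨⟨hz1, hzY⟩, hzr⟩, hzmin⟩ := hcpt.exists_isLeast ⟨Y, ⟨hY1, le_rfl⟩, hY⟩
    have hzr : r₁ + r₂ ≤ D z := hzr
    have hbefore : ∀ y, 1 ≤ y → y < z → D y < r₁ + r₂ := by
      intro y hy hyz
      by_contra hcon
      exact absurd (hzmin ⟨⟨hy, by linarith⟩, not_lt.1 hcon⟩) (not_le.2 hyz)
    have hz : 1 < z := by
      rcases hz1.eq_or_lt with rfl | h
      · linarith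
      · exact h
    have hDz := hDpos z hz1
    have mz := hDm z hz1
    have hH : apexY r₁ r₂ (D z) = 0 :=
      apexY_eq_zero hDz (by linarith) (by linarith) hr₁ hzr
    have cX : ContinuousOn (fun y => apexX r₁ r₂ (D y)) (Set.Ici 1) := by
      unfold apexX
      exact ContinuousOn.div (by fun_prop) (by fun_prop) fun y hy => by
        have := hDpos y hy; positivity
    have cY : ContinuousOn (fun y => apexY r₁ r₂ (D y)) (Set.Ici 1) := by
      unfold apexY
      fun_prop
    have c₁ : ContinuousOn (fun y => r₁ + apexX r₁ r₂ (D y) + a y * apexY r₁ r₂ (D y))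
        (Set.Ici 1) := by fun_prop
    have c₂ : ContinuousOn (fun y => r₂ + (D y - apexX r₁ r₂ (D y)) - b y * apexY r₁ r₂ (D y))
        (Set.Ici 1) := by fun_prop
    have p₁ : 0 < r₁ + apexX r₁ r₂ (D z) + a z * apexY r₁ r₂ (D z) := by
      rw [hH, mul_zero, add_zero, add_apexX hDz]
      exact div_pos (by nlinarith) (by linarith)
    have p₂ : 0 < r₂ + (D z - apexX r₁ r₂ (D z)) - b z * apexY r₁ r₂ (D z) := by
      rw [hH, mul_zero, sub_zero, add_sub_apexX hDz]
      exact div_pos (by nlinarith) (by linarith)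
    have ev₁ := (c₁ z hz1).eventually (lt_mem_nhds p₁)
    have ev₂ := (c₂ z hz1).eventually (lt_mem_nhds p₂)
    have hsub : Set.Ioo 1 z ⊆ Set.Ici 1 := fun y hy => hy.1.le
    have := right_nhdsWithin_Ioo_neBot hz
    obtain ⟨y, ⟨hy₁, hy₂⟩, hy⟩ := ((ev₁.and ev₂).filter_mono (nhdsWithin_mono z hsub)).and
      self_mem_nhdsWithin |>.exists
    exact ⟨y, hy.1.le, fun w hw hwy => hbefore w hw (hwy.trans_lt hy.2), hy₁, hy₂⟩

end Apex

theorem mul_hcos_half_tangent {x y ℓ : ℝ} (hℓ : ℓ ^ 2 = x ^ 2 + y ^ 2) (h : 0 < ℓ + x) :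
    ℓ * hcos (y / (ℓ + x)) = x := by
  unfold hcos
  have h' := h.ne'
  have h2 : (ℓ + x) ^ 2 + y ^ 2 ≠ 0 := by positivity
  field_simp
  linear_combination (ℓ + x) * hℓ

theorem mul_hsin_half_tangent {x y ℓ : ℝ} (hℓ : ℓ ^ 2 = x ^ 2 + y ^ 2) (h : 0 < ℓ + x) :
    ℓ * hsin (y / (ℓ + x)) = y := by
  unfold hsin
  have h' := h.ne'
  have h2 : (ℓ + x) ^ 2 + y ^ 2 ≠ 0 := by positivity
  field_simp
  linear_combination y * hℓ

theorem add_pos_of_ne_zero {x y ℓ : ℝ} (hℓ0 : 0 ≤ ℓ) (hℓ : ℓ ^ 2 = x ^ 2 + y ^ 2)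
    (h : y = 0 → 0 < x) : 0 < ℓ + x := by
  by_cases hy : y = 0
  · linarith [h hy]
  · have : 0 < y ^ 2 := by positivity
    nlinarith

/-- A left turn which is not a local maximum of the height increases the half-angle tangent of the
direction. -/
theorem half_tangent_lt_of_left_turn {x y ℓ x' y' ℓ' : ℝ} (hℓ0 : 0 ≤ ℓ) (hℓ : ℓ ^ 2 = x ^ 2 + y ^ 2)
    (hℓ0' : 0 ≤ ℓ') (hℓ' : ℓ' ^ 2 = x' ^ 2 + y' ^ 2) (hturn : 0 < x * y' - y * x')
    (hmax : ¬(0 ≤ y ∧ y' ≤ 0)) :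
    0 < ℓ + x ∧ 0 < ℓ' + x' ∧ y / (ℓ + x) < y' / (ℓ' + x') := by
  have h1 : 0 < ℓ + x := by
    refine add_pos_of_ne_zero hℓ0 hℓ fun hy => ?_
    have : 0 < y' := by
      by_contra hcon
      exact hmax ⟨hy.ge, not_lt.1 hcon⟩
    subst hy
    exact pos_of_mul_pos_left (by linarith) this.le
  have h2 : 0 < ℓ' + x' := by
    refine add_pos_of_ne_zero hℓ0' hℓ' fun hy => ?_
    have : y < 0 := by
      by_contra hcon
      exact hmax ⟨not_lt.1 hcon, hy.le⟩
    subst hy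
    nlinarith
  refine ⟨h1, h2, ?_⟩
  have same : 0 ≤ y / (ℓ + x) * (y' / (ℓ' + x')) → y / (ℓ + x) < y' / (ℓ' + x') := by
    intro hs
    have e := hcos_mul_hsin_sub (y / (ℓ + x)) (y' / (ℓ' + x'))
    set u := y / (ℓ + x) with hu
    set v := y' / (ℓ' + x') with hv
    have ex : ℓ * hcos u = x := mul_hcos_half_tangent hℓ h1
    have ey : ℓ * hsin u = y := mul_hsin_half_tangent hℓ h1
    have ex' : ℓ' * hcos v = x' := mul_hcos_half_tangent hℓ' h2
    have ey' : ℓ' * hsin v = y' := mul_hsin_half_tangent hℓ' h2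
    have : 0 < ℓ * ℓ' * (hcos u * hsin v - hsin u * hcos v) := by
      calc 0 < x * y' - y * x' := hturn
        _ = _ := by rw [← ex, ← ey, ← ex', ← ey']; ring
    rw [e] at this
    by_contra hcon
    push Not at hcon
    have h5 : 2 * (v - u) * (1 + u * v) / ((1 + u ^ 2) * (1 + v ^ 2)) ≤ 0 := by
      refine div_nonpos_of_nonpos_of_nonneg ?_ (by positivity)
      nlinarith
    have := mul_nonneg hℓ0 hℓ0'
    nlinarith
  rcases lt_or_ge y 0 with hy | hy
  · rcases lt_or_ge y' 0 with hy' | hy'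
    · exact same (mul_pos_of_neg_of_neg (div_neg_of_neg_of_pos hy h1)
        (div_neg_of_neg_of_pos hy' h2)).le
    · exact (div_neg_of_neg_of_pos hy h1).trans_le (by positivity)
  · have hy' : 0 < y' := by
      by_contra hcon
      exact hmax ⟨hy, not_lt.1 hcon⟩
    exact same (by positivity)

theorem plane_norm_sq (a : E2) : ‖a‖ ^ 2 = a 0 ^ 2 + a 1 ^ 2 := by
  rw [EuclideanSpace.real_norm_sq_eq, Fin.sum_univ_two]

theorem plane_norm_eq {a : E2} {r : ℝ} (hr : 0 ≤ r) (h : a 0 ^ 2 + a 1 ^ 2 = r ^ 2) : ‖a‖ = r := by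
  rw [← plane_norm_sq] at h
  exact (pow_left_inj₀ (norm_nonneg a) hr two_ne_zero).1 h

/-- The convex chain of a capped chain is described by its edge lengths and the increasing
half-angle tangents of its edge directions. -/
theorem IsCappedChain.exists_half_tangents {k : ℕ} {p : ℕ → E2} (h : IsCappedChain k p) :
    ∃ ℓ u : ℕ → ℝ, (∀ i < k, 0 < ℓ i) ∧ (∀ i j, i < j → j < k → u i < u j) ∧
      ∀ j ≤ k, p j 0 = chainX ℓ u 0 1 j ∧ p j 1 = chainY ℓ u 0 1 j := by
  have h2 := h.two_le
  set e : ℕ → E2 := fun i => p (i + 1) - p i with he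
  have step : ∀ i, i + 1 < k → 0 < ‖e i‖ + e i 0 ∧ 0 < ‖e (i + 1)‖ + e (i + 1) 0 ∧
      e i 1 / (‖e i‖ + e i 0) < e (i + 1) 1 / (‖e (i + 1)‖ + e (i + 1) 0) := by
    intro i hi
    have t1 := h.left i (i + 2) (by omega) (by omega) (by omega) (by omega)
    have t2 := h.left (i + 1) 0 hi (by omega) (by omega) (by omega)
    have t3 : 0 ≤ planeCross (e i) (p 0 - p i) := by
      rcases Nat.eq_zero_or_pos i with rfl | h0
      · rw [sub_self, map_zero]
      · exact (h.left i 0 (by omega) (by omega) (by omega) (by omega)).le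
    have t4 := h.below (i + 1) (by omega) hi
    simp only [planeCross_apply, he, PiLp.sub_apply, h.first_fst, h.first_snd,
      show i + 1 + 1 = i + 2 from rfl] at t1 t2 t3 t4 ⊢
    have hturn : 0 < (p (i + 1) 0 - p i 0) * (p (i + 2) 1 - p (i + 1) 1) -
        (p (i + 1) 1 - p i 1) * (p (i + 2) 0 - p (i + 1) 0) := by linarith
    refine half_tangent_lt_of_left_turn (norm_nonneg _) (plane_norm_sq _) (norm_nonneg _)
      (plane_norm_sq _) hturn ?_
    rintro ⟨s1, s2⟩
    have key := mul_pos hturn (neg_pos.2 t4)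
    have m1 := mul_nonneg t2.le s1
    have m2 := mul_nonneg t3 (neg_nonneg.2 s2)
    nlinarith
  have hpos : ∀ i < k, 0 < ‖e i‖ + e i 0 := by
    intro i hi
    rcases Nat.eq_zero_or_pos i with rfl | h0
    · exact (step 0 (by omega)).1
    · have := (step (i - 1) (by omega)).2.1
      rwa [Nat.sub_add_cancel h0] at this
  refine ⟨fun i => ‖e i‖, fun i => e i 1 / (‖e i‖ + e i 0), fun i hi => ?_, fun i j hij hj => ?_, ?_⟩
  · exact norm_pos_iff.2 (sub_ne_zero.2 (h.ne (Nat.lt_succ_self i) (by omega)).symm)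
  · induction j, hij using Nat.le_induction with
    | base => exact (step i hj).2.2
    | succ j hij ih => exact (ih (by omega)).trans (step j hj).2.2
  · intro j hj
    unfold chainX chainY
    induction j with
    | zero => simp [h.first_fst, h.first_snd]
    | succ j ih =>
      obtain ⟨i0, i1⟩ := ih (by omega)
      rw [Finset.sum_range_succ, Finset.sum_range_succ, ← i0, ← i1, sub_zero, div_one,
        mul_hcos_half_tangent (plane_norm_sq _) (hpos j (by omega)),
        mul_hsin_half_tangent (plane_norm_sq _) (hpos j (by omega))]
      simp [he]

/-- The chain of `k` edges with lengths `ℓ` and half-angle tangents `(u i - c) / y`, followed by the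
apex of the triangle over its base with sides `r₁` and `r₂`. -/
def cappedChain (ℓ u : ℕ → ℝ) (k : ℕ) (r₁ r₂ c y : ℝ) (j : ℕ) : E2 :=
  if j ≤ k then !₂[chainX ℓ u c y j, chainY ℓ u c y j]
  else !₂[apexX r₁ r₂ (chainX ℓ u c y k), apexY r₁ r₂ (chainX ℓ u c y k)]

section CappedChain

variable {ℓ u : ℕ → ℝ} {k : ℕ} {r₁ r₂ c y : ℝ}

theorem cappedChain_fst {j : ℕ} (hj : j ≤ k) :
    cappedChain ℓ u k r₁ r₂ c y j 0 = chainX ℓ u c y j := by simp [cappedChain, hj]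

theorem cappedChain_snd {j : ℕ} (hj : j ≤ k) :
    cappedChain ℓ u k r₁ r₂ c y j 1 = chainY ℓ u c y j := by simp [cappedChain, hj]

theorem cappedChain_apex_fst :
    cappedChain ℓ u k r₁ r₂ c y (k + 1) 0 = apexX r₁ r₂ (chainX ℓ u c y k) := by simp [cappedChain]

theorem cappedChain_apex_snd :
    cappedChain ℓ u k r₁ r₂ c y (k + 1) 1 = apexY r₁ r₂ (chainX ℓ u c y k) := by simp [cappedChain]

theorem cappedChain_edge_fst {i : ℕ} (hi : i < k) :
    (cappedChain ℓ u k r₁ r₂ c y (i + 1) - cappedChain ℓ u k r₁ r₂ c y i) 0 =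
      ℓ i * hcos ((u i - c) / y) := by
  rw [PiLp.sub_apply, cappedChain_fst (show i + 1 ≤ k from hi), cappedChain_fst hi.le]
  simp [chainX, Finset.sum_range_succ]

theorem cappedChain_edge_snd {i : ℕ} (hi : i < k) :
    (cappedChain ℓ u k r₁ r₂ c y (i + 1) - cappedChain ℓ u k r₁ r₂ c y i) 1 =
      ℓ i * hsin ((u i - c) / y) := by
  rw [PiLp.sub_apply, cappedChain_snd (show i + 1 ≤ k from hi), cappedChain_snd hi.le]
  simp [chainY, Finset.sum_range_succ]

theorem sub_div_strictMono (hu : ∀ i j, i < j → j < k → u i < u j) (hy : 0 < y) :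
    ∀ i j, i < j → j < k → (u i - c) / y < (u j - c) / y := fun i j hij hj =>
  div_lt_div_of_pos_right (sub_lt_sub_right (hu i j hij hj) c) hy

theorem isCappedChain_cappedChain (hk : 2 ≤ k) (hℓ : ∀ i < k, 0 < ℓ i)
    (hu : ∀ i j, i < j → j < k → u i < u j) (hy : 0 < y) (hY : chainY ℓ u c y k = 0)
    (hX : 0 < chainX ℓ u c y k) (h1 : r₁ - r₂ < chainX ℓ u c y k)
    (h2 : r₂ - r₁ < chainX ℓ u c y k) (h3 : chainX ℓ u c y k < r₁ + r₂) :
    IsCappedChain k (cappedChain ℓ u k r₁ r₂ c y) := by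
  have hu' := sub_div_strictMono (c := c) hu hy
  refine ⟨hk, ?_, ?_, ?_, ?_, fun j h0 hj => ?_, fun i j hi hj hji hji1 => ?_, ?_⟩
  · rw [cappedChain_fst (Nat.zero_le k)]; simp [chainX]
  · rw [cappedChain_snd (Nat.zero_le k)]; simp [chainY]
  · rwa [cappedChain_fst le_rfl]
  · rwa [cappedChain_snd le_rfl]
  · rw [cappedChain_snd hj.le]
    exact chain_below_base hℓ hu' hY h0 hj
  · rw [planeCross_apply, cappedChain_edge_fst hi, cappedChain_edge_snd hi, PiLp.sub_apply,
      PiLp.sub_apply, cappedChain_fst hj, cappedChain_snd hj, cappedChain_fst hi.le,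
      cappedChain_snd hi.le, mul_assoc, mul_assoc, ← mul_sub]
    exact mul_pos (hℓ i hi) (chain_left_of_edge hℓ hu' hY hX hi hj hji hji1)
  · rw [cappedChain_apex_snd]
    exact Real.sqrt_pos.2 (apex_sq_pos hX h1 h2 h3)

theorem norm_cappedChain_edge (hℓ : ∀ i < k, 0 < ℓ i) {i : ℕ} (hi : i < k) :
    ‖cappedChain ℓ u k r₁ r₂ c y (i + 1) - cappedChain ℓ u k r₁ r₂ c y i‖ = ℓ i := by
  refine plane_norm_eq (hℓ i hi).le ?_
  rw [cappedChain_edge_fst hi, cappedChain_edge_snd hi]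
  linear_combination ℓ i ^ 2 * hcos_sq_add_hsin_sq ((u i - c) / y)

theorem norm_cappedChain_apex_sub_first (hr₁ : 0 ≤ r₁)
    (hap : 0 ≤ r₁ ^ 2 - apexX r₁ r₂ (chainX ℓ u c y k) ^ 2) :
    ‖cappedChain ℓ u k r₁ r₂ c y (k + 1) - cappedChain ℓ u k r₁ r₂ c y 0‖ = r₁ := by
  refine plane_norm_eq hr₁ ?_
  rw [PiLp.sub_apply, PiLp.sub_apply, cappedChain_apex_fst, cappedChain_apex_snd,
    cappedChain_fst (Nat.zero_le k), cappedChain_snd (Nat.zero_le k)]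
  rw [show chainX ℓ u c y 0 = 0 by simp [chainX], show chainY ℓ u c y 0 = 0 by simp [chainY],
    sub_zero, sub_zero, apexY, Real.sq_sqrt hap]
  ring

theorem norm_cappedChain_apex_sub_last (hr₂ : 0 ≤ r₂) (hX : 0 < chainX ℓ u c y k)
    (hY : chainY ℓ u c y k = 0) (hap : 0 ≤ r₁ ^ 2 - apexX r₁ r₂ (chainX ℓ u c y k) ^ 2) :
    ‖cappedChain ℓ u k r₁ r₂ c y (k + 1) - cappedChain ℓ u k r₁ r₂ c y k‖ = r₂ := by
  refine plane_norm_eq hr₂ ?_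
  rw [PiLp.sub_apply, PiLp.sub_apply, cappedChain_apex_fst, cappedChain_apex_snd,
    cappedChain_fst le_rfl, cappedChain_snd le_rfl, hY, sub_zero, apexY, Real.sq_sqrt hap]
  unfold apexX
  field_simp
  ring

theorem apexX_of_sq {X H d : ℝ} (hd : 0 < d) (h1 : r₁ ^ 2 = X ^ 2 + H ^ 2)
    (h2 : r₂ ^ 2 = (X - d) ^ 2 + H ^ 2) : apexX r₁ r₂ d = X := by
  unfold apexX
  rw [h1, h2]
  field_simp
  ring

theorem apexY_of_sq {X H d : ℝ} (hd : 0 < d) (hH : 0 ≤ H) (h1 : r₁ ^ 2 = X ^ 2 + H ^ 2)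
    (h2 : r₂ ^ 2 = (X - d) ^ 2 + H ^ 2) : apexY r₁ r₂ d = H := by
  rw [apexY, apexX_of_sq hd h1 h2, h1, add_sub_cancel_left, Real.sqrt_sq hH]

/-- A descending direction turns left towards the apex as soon as the steepest one does. -/
theorem apex_left_of_descending {r X H u₀ u : ℝ} (hH : 0 < H) (hr : r ^ 2 = X ^ 2 + H ^ 2)
    (hrX : 0 < r + X) (hu₀ : u₀ ≤ u) (hu : u ≤ 0) (h : 0 < r + X + u₀ * H) :
    0 < hcos u * H - hsin u * X := by
  have key : ((1 - u ^ 2) * H - 2 * u * X) * (r + X) = (H - u * (r + X)) * (r + X + u * H) := by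
    linear_combination u * hr
  have p1 : 0 < H - u * (r + X) := by nlinarith
  have p2 : 0 < r + X + u * H := by nlinarith
  have p3 : 0 < (1 - u ^ 2) * H - 2 * u * X :=
    pos_of_mul_pos_left (by rw [key]; exact mul_pos p1 p2) hrX.le
  have : hcos u * H - hsin u * X = ((1 - u ^ 2) * H - 2 * u * X) / (1 + u ^ 2) := by
    unfold hcos hsin; ring
  rw [this]
  positivity

theorem hcos_neg (x : ℝ) : hcos (-x) = hcos x := by simp [hcos]

theorem hsin_neg_eq (x : ℝ) : hsin (-x) = -hsin x := by simp [hsin, neg_div]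

theorem cappedChain_apex_left (hk : 2 ≤ k) (hu : ∀ i j, i < j → j < k → u i < u j) (hy : 0 < y)
    (hℓ : ∀ i < k, 0 < ℓ i) (hr₁ : 0 ≤ r₁) (hr₂ : 0 ≤ r₂)
    (h : IsCappedChain k (cappedChain ℓ u k r₁ r₂ c y))
    (hap : 0 < r₁ ^ 2 - apexX r₁ r₂ (chainX ℓ u c y k) ^ 2)
    (ha : 0 < r₁ + apexX r₁ r₂ (chainX ℓ u c y k) +
      (u 0 - c) / y * apexY r₁ r₂ (chainX ℓ u c y k))
    (hb : 0 < r₂ + (chainX ℓ u c y k - apexX r₁ r₂ (chainX ℓ u c y k)) -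
      (u (k - 1) - c) / y * apexY r₁ r₂ (chainX ℓ u c y k)) {i : ℕ} (hi : i < k) :
    0 < planeCross (cappedChain ℓ u k r₁ r₂ c y (i + 1) - cappedChain ℓ u k r₁ r₂ c y i)
      (cappedChain ℓ u k r₁ r₂ c y (k + 1) - cappedChain ℓ u k r₁ r₂ c y i) := by
  have hu' := sub_div_strictMono (c := c) hu hy
  have hX : 0 < chainX ℓ u c y k := by
    have := h.last_fst
    rwa [cappedChain_fst le_rfl] at this
  have hH : 0 < apexY r₁ r₂ (chainX ℓ u c y k) := Real.sqrt_pos.2 hap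
  have n1 : r₁ ^ 2 = apexX r₁ r₂ (chainX ℓ u c y k) ^ 2 + apexY r₁ r₂ (chainX ℓ u c y k) ^ 2 := by
    rw [apexY, Real.sq_sqrt hap.le]; ring
  have n2 : r₂ ^ 2 = (chainX ℓ u c y k - apexX r₁ r₂ (chainX ℓ u c y k)) ^ 2 +
      apexY r₁ r₂ (chainX ℓ u c y k) ^ 2 := by
    rw [apexY, Real.sq_sqrt hap.le]
    unfold apexX
    field_simp
    ring
  have split : ∀ a b q x : E2, planeCross (b - a) (x - a) =
      planeCross (b - a) (q - a) + planeCross (b - a) (x - q) := fun a b q x => by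
    rw [← map_add, sub_add_sub_cancel']
  rcases le_total ((u i - c) / y) 0 with hs | hs
  · rw [split _ _ (cappedChain ℓ u k r₁ r₂ c y 0)]
    refine add_pos_of_nonneg_of_pos ?_ ?_
    · rcases Nat.eq_zero_or_pos i with rfl | h0
      · rw [sub_self, map_zero]
      · exact (h.left i 0 hi (by omega) (by omega) (by omega)).le
    · rw [planeCross_apply, cappedChain_edge_fst hi, cappedChain_edge_snd hi, PiLp.sub_apply,
        PiLp.sub_apply, h.first_fst, h.first_snd, cappedChain_apex_fst, cappedChain_apex_snd,
        sub_zero, sub_zero, mul_assoc, mul_assoc, ← mul_sub]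
      refine mul_pos (hℓ i hi) (apex_left_of_descending hH n1 ?_ ?_ hs ha)
      · exact add_pos_of_ne_zero hr₁ n1 fun h0 => absurd h0 hH.ne'
      · rcases Nat.eq_zero_or_pos i with rfl | h0
        · exact le_rfl
        · exact (hu' 0 i h0 hi).le
  · rw [split _ _ (cappedChain ℓ u k r₁ r₂ c y k)]
    refine add_pos_of_nonneg_of_pos ?_ ?_
    · rcases (show i + 1 ≤ k from hi).eq_or_lt with h0 | h0
      · rw [h0, planeCross_self]
      · exact (h.left i k hi le_rfl (by omega) (by omega)).le
    · rw [planeCross_apply, cappedChain_edge_fst hi, cappedChain_edge_snd hi, PiLp.sub_apply,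
        PiLp.sub_apply, h.last_snd, cappedChain_fst le_rfl, cappedChain_apex_fst,
        cappedChain_apex_snd, sub_zero, mul_assoc, mul_assoc, ← mul_sub]
      have := apex_left_of_descending (u := -((u i - c) / y)) (u₀ := -((u (k - 1) - c) / y)) hH n2
        (add_pos_of_ne_zero hr₂ n2 fun h0 => absurd h0 hH.ne') ?_ (neg_nonpos.2 hs) (by linarith)
      · rw [hcos_neg, hsin_neg_eq] at this
        exact mul_pos (hℓ i hi) (by linarith)
      · rw [neg_le_neg_iff]
        rcases (show i ≤ k - 1 by omega).eq_or_lt with h0 | h0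
        · rw [h0]
        · exact (hu' i (k - 1) h0 (by omega)).le

end CappedChain

theorem triangle_of_sq {r₁ r₂ X H d : ℝ} (hd : 0 < d) (hH : 0 < H) (hr₁ : 0 ≤ r₁) (hr₂ : 0 ≤ r₂)
    (h1 : r₁ ^ 2 = X ^ 2 + H ^ 2) (h2 : r₂ ^ 2 = (X - d) ^ 2 + H ^ 2) :
    r₁ - r₂ < d ∧ r₂ - r₁ < d ∧ d < r₁ + r₂ := by
  have a1 : |X| < r₁ := abs_lt_of_sq_lt_sq (by nlinarith) hr₁
  have a2 : |X - d| < r₂ := abs_lt_of_sq_lt_sq (by nlinarith) hr₂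
  rw [abs_lt] at a1 a2
  refine ⟨?_, ?_, by linarith⟩
  · have : r₁ < r₂ + d := lt_of_pow_lt_pow_left₀ 2 (by positivity) (by nlinarith)
    linarith
  · have : r₂ < r₁ + d := lt_of_pow_lt_pow_left₀ 2 (by positivity) (by nlinarith)
    linarith

theorem continuousOn_mk_plane {s : Set ℝ} {f g : ℝ → ℝ} (hf : ContinuousOn f s)
    (hg : ContinuousOn g s) : ContinuousOn (fun t => (!₂[f t, g t] : E2)) s := by
  refine (PiLp.continuous_toLp 2 _).comp_continuousOn (continuousOn_pi.2 fun i => ?_)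
  fin_cases i
  · exact hf
  · exact hg

theorem continuousOn_chainX (ℓ u : ℕ → ℝ) {c : ℝ → ℝ} (hc : ContinuousOn c (Set.Ici 1)) (j : ℕ) :
    ContinuousOn (fun y => chainX ℓ u (c y) y j) (Set.Ici 1) := by
  unfold chainX
  refine continuousOn_finsetSum _ fun i _ => continuousOn_const.mul
    (continuous_hcos.comp_continuousOn (ContinuousOn.div (by fun_prop) continuousOn_id ?_))
  exact fun y hy => (zero_lt_one.trans_le hy).ne'

theorem continuousOn_chainY (ℓ u : ℕ → ℝ) {c : ℝ → ℝ} (hc : ContinuousOn c (Set.Ici 1)) (j : ℕ) :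
    ContinuousOn (fun y => chainY ℓ u (c y) y j) (Set.Ici 1) := by
  unfold chainY
  refine continuousOn_finsetSum _ fun i _ => continuousOn_const.mul
    (continuous_hsin.comp_continuousOn (ContinuousOn.div (by fun_prop) continuousOn_id ?_))
  exact fun y hy => (zero_lt_one.trans_le hy).ne'

/-- Every capped chain can be convexified: the chain is flattened while its base expands. -/
theorem IsCappedChain.exists_motion {k : ℕ} {p : ℕ → E2} (h : IsCappedChain k p) :
    ∃ γ : ℝ → ℕ → E2, IsPlanarMotion (k + 2) p γ ∧ IsConvexPolygonConfig (k + 2) (γ 1) := by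
  have hk := h.two_le
  obtain ⟨ℓ, u, hℓ, hu, hp⟩ := h.exists_half_tangents
  set r₁ := ‖p (k + 1) - p 0‖ with hr₁
  set r₂ := ‖p (k + 1) - p k‖ with hr₂
  have pr₁ : 0 ≤ r₁ := norm_nonneg _
  have pr₂ : 0 ≤ r₂ := norm_nonneg _
  have hX : 0 < chainX ℓ u 0 1 k := (hp k le_rfl).1 ▸ h.last_fst
  have hY : chainY ℓ u 0 1 k = 0 := (hp k le_rfl).2 ▸ h.last_snd
  have n1 : r₁ ^ 2 = p (k + 1) 0 ^ 2 + p (k + 1) 1 ^ 2 := by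
    rw [hr₁, plane_norm_sq, PiLp.sub_apply, PiLp.sub_apply, h.first_fst, h.first_snd, sub_zero,
      sub_zero]
  have n2 : r₂ ^ 2 = (p (k + 1) 0 - chainX ℓ u 0 1 k) ^ 2 + p (k + 1) 1 ^ 2 := by
    rw [hr₂, plane_norm_sq, PiLp.sub_apply, PiLp.sub_apply, h.last_snd, (hp k le_rfl).1, sub_zero]
  obtain ⟨t1, t2, t3⟩ := triangle_of_sq hX h.above pr₁ pr₂ n1 n2
  obtain ⟨c, hc, hc1, hcl⟩ := exists_continuous_closing_shift hℓ hY hX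
  set D : ℝ → ℝ := fun y => chainX ℓ u (c y) y k with hDdef
  have hD1 : D 1 = chainX ℓ u 0 1 k := by rw [hDdef, ← hc1]
  have hDc : ContinuousOn D (Set.Ici 1) := continuousOn_chainX ℓ u hc k
  have hDm : ∀ y, 1 ≤ y → D 1 ≤ D y := fun y hy => hD1 ▸ (hcl y hy).2
  have hDL : ∀ y, 1 ≤ y → D y ≤ ∑ i ∈ Finset.range k, ℓ i := fun y _ =>
    Finset.sum_le_sum fun i hi =>
      mul_le_of_le_one_right (hℓ i (Finset.mem_range.1 hi)).le (hcos_le_one _)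
  have hab : ∀ y, 1 ≤ y → u 0 < c y ∧ c y < u (k - 1) := by
    intro y hy
    have hy0 : 0 < y := by linarith
    have f1 := chain_first_neg hk hℓ (sub_div_strictMono (c := c y) hu hy0) (hcl y hy).1
    have f2 := chain_last_pos hk hℓ (sub_div_strictMono (c := c y) hu hy0) (hcl y hy).1
    rw [div_neg_iff] at f1
    rw [div_pos_iff] at f2
    constructor
    · rcases f1 with f1 | f1 <;> linarith
    · rcases f2 with f2 | f2 <;> linarith
  have bnd : ∀ s, s = u 0 ∨ s = u (k - 1) → ∀ y, 1 ≤ y →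
      |(s - c y) / y| ≤ (u (k - 1) - u 0) / y := by
    intro s hs y hy
    have hy0 : 0 < y := by linarith
    obtain ⟨f1, f2⟩ := hab y hy
    rw [abs_div, abs_of_pos hy0]
    refine div_le_div_of_nonneg_right (abs_le.2 ?_) hy0.le
    rcases hs with rfl | rfl <;> constructor <;> linarith
  have cont : ∀ s, ContinuousOn (fun y => (s - c y) / y) (Set.Ici 1) := fun s =>
    ContinuousOn.div (by fun_prop) continuousOn_id fun y hy => (zero_lt_one.trans_le hy).ne'
  obtain ⟨y₁, hy₁, hlt, ha, hb⟩ := exists_time_apex_convex hDc (cont (u 0)) (cont (u (k - 1))) pr₁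
    pr₂ (hD1 ▸ hX) hDm hDL (by linarith [(hab 1 le_rfl).1, (hab 1 le_rfl).2])
    (bnd _ (Or.inl rfl)) (bnd _ (Or.inr rfl)) (hD1 ▸ t1) (hD1 ▸ t2) (hD1 ▸ t3)
  have hDpos : ∀ y, 1 ≤ y → 0 < D y := fun y hy => (hD1 ▸ hX : 0 < D 1).trans_le (hDm y hy)
  have hap : ∀ y, 1 ≤ y → y ≤ y₁ → 0 < r₁ ^ 2 - apexX r₁ r₂ (D y) ^ 2 := fun y hy hy' =>
    apex_sq_pos (hDpos y hy) (by linarith [hDm y hy]) (by linarith [hDm y hy]) (hlt y hy hy')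
  have hcap : ∀ y, 1 ≤ y → y ≤ y₁ → IsCappedChain k (cappedChain ℓ u k r₁ r₂ (c y) y) :=
    fun y hy hy' => isCappedChain_cappedChain hk hℓ hu (by linarith) (hcl y hy).1 (hDpos y hy)
      (show _ < D y by linarith [hDm y hy]) (show _ < D y by linarith [hDm y hy]) (hlt y hy hy')
  have hlen : ∀ y, 1 ≤ y → y ≤ y₁ → ∀ i, i < k + 2 →
      ‖cappedChain ℓ u k r₁ r₂ (c y) y ((i + 1) % (k + 2)) - cappedChain ℓ u k r₁ r₂ (c y) y i‖ =
        if i < k then ℓ i else if i = k then r₂ else r₁ := by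
    intro y hy hy' i hi
    split_ifs with c1 c2
    · rw [Nat.mod_eq_of_lt (by omega), norm_cappedChain_edge hℓ c1]
    · rw [c2, Nat.mod_eq_of_lt (by omega),
        norm_cappedChain_apex_sub_last pr₂ (hDpos y hy) (hcl y hy).1 (hap y hy hy').le]
    · obtain rfl : i = k + 1 := by omega
      rw [Nat.mod_self, norm_sub_rev, norm_cappedChain_apex_sub_first pr₁ (hap y hy hy').le]
  have hstart : ∀ i, i < k + 2 → cappedChain ℓ u k r₁ r₂ (c 1) 1 i = p i := by
    intro i hi
    rw [hc1]
    ext m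
    rcases (show i ≤ k + 1 by omega).eq_or_lt with rfl | hi'
    · fin_cases m
      · exact cappedChain_apex_fst.trans (apexX_of_sq hX n1 n2)
      · exact cappedChain_apex_snd.trans (apexY_of_sq hX h.above.le n1 n2)
    · have hik : i ≤ k := by omega
      fin_cases m
      · exact (cappedChain_fst hik).trans (hp i hik).1.symm
      · exact (cappedChain_snd hik).trans (hp i hik).2.symm
  have hτ : ∀ t ∈ Set.Icc (0 : ℝ) 1, 1 ≤ 1 + t * (y₁ - 1) ∧ 1 + t * (y₁ - 1) ≤ y₁ := by
    rintro t ⟨s1, s2⟩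
    constructor <;> nlinarith
  refine ⟨fun t => cappedChain ℓ u k r₁ r₂ (c (1 + t * (y₁ - 1))) (1 + t * (y₁ - 1)),
    ⟨fun i hi => ?_, fun i hi => ?_, fun t ht => ?_, fun t ht i hi => ?_⟩, ?_⟩
  · have hcfg : ContinuousOn (fun y => cappedChain ℓ u k r₁ r₂ (c y) y i) (Set.Ici 1) := by
      unfold cappedChain
      split_ifs with hik
      · exact continuousOn_mk_plane (continuousOn_chainX ℓ u hc i) (continuousOn_chainY ℓ u hc i)
      · have cX : ContinuousOn (fun y => apexX r₁ r₂ (D y)) (Set.Ici 1) := by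
          unfold apexX
          exact ContinuousOn.div (by fun_prop) (by fun_prop) fun y hy => by
            have := hDpos y hy; positivity
        refine continuousOn_mk_plane cX ?_
        unfold apexY
        fun_prop
    exact hcfg.comp (f := fun t : ℝ => 1 + t * (y₁ - 1)) (by fun_prop) fun t ht => (hτ t ht).1
  · simp only [zero_mul, add_zero]
    exact hstart i hi
  · exact (hcap _ (hτ t ht).1 (hτ t ht).2).isSimplePolygon
  · have e0 := hlen 1 le_rfl hy₁ i hi
    rw [hstart i hi, hstart _ (Nat.mod_lt _ (by omega))] at e0
    rw [e0]
    exact hlen _ (hτ t ht).1 (hτ t ht).2 i hi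
  · simp only [one_mul, add_sub_cancel]
    exact (hcap y₁ hy₁ le_rfl).isConvexPolygonConfig fun i hi =>
      cappedChain_apex_left hk hu (by linarith) hℓ pr₁ pr₂ (hcap y₁ hy₁ le_rfl)
        (hap y₁ hy₁ le_rfl) ha hb hi

section Rotation

variable {n : ℕ} {w : ℕ → E2}

theorem exists_add_mod_eq (s : ℕ) {i : ℕ} (hi : i < n) : ∃ j < n, (j + s) % n = i := by
  have hs : s % n < n := Nat.mod_lt _ (by omega)
  refine ⟨(i + (n - s % n)) % n, Nat.mod_lt _ (by omega), ?_⟩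
  have e : i + (n - s % n) + s = i + n * (1 + s / n) := by
    have := Nat.mod_add_div s n
    rw [mul_add, mul_one]
    omega
  rw [Nat.mod_add_mod, e, Nat.add_mul_mod_self_left, Nat.mod_eq_of_lt hi]

theorem add_mod_injective {s i j : ℕ} (hi : i < n) (hj : j < n) (h : (i + s) % n = (j + s) % n) :
    i = j := by
  have := Nat.ModEq.add_right_cancel' s h
  rwa [Nat.ModEq, Nat.mod_eq_of_lt hi, Nat.mod_eq_of_lt hj] at this

theorem succ_add_mod (s i : ℕ) : ((i + 1) % n + s) % n = ((i + s) % n + 1) % n := by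
  rw [Nat.mod_add_mod, Nat.mod_add_mod, Nat.add_right_comm]

theorem polygonBoundary_rotate (s : ℕ) :
    polygonBoundary n (fun j => w ((j + s) % n)) = polygonBoundary n w := by
  ext z
  constructor
  · rintro ⟨i, hi, hz⟩
    exact ⟨(i + s) % n, Nat.mod_lt _ (by omega), succ_add_mod (n := n) s i ▸ hz⟩
  · rintro ⟨i, hi, hz⟩
    obtain ⟨j, hj, rfl⟩ := exists_add_mod_eq s hi
    rw [← succ_add_mod] at hz
    exact ⟨j, hj, hz⟩

theorem polygonInterior_rotate (s : ℕ) :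
    polygonInterior n (fun j => w ((j + s) % n)) = polygonInterior n w := by
  rw [polygonInterior, polygonInterior, polygonBoundary_rotate]

theorem IsSimplePolygon.eq_of_mem_edges (h : IsSimplePolygon n w) {i j : ℕ} {z : E2} (hi : i < n)
    (hj : j < n) (hij : i ≠ j) (hzi : z ∈ segment ℝ (w i) (w ((i + 1) % n)))
    (hzj : z ∈ segment ℝ (w j) (w ((j + 1) % n))) :
    ((i + 1) % n = j ∧ z = w j) ∨ ((j + 1) % n = i ∧ z = w i) := by
  have key : ∀ i j, i < j → j < n → z ∈ segment ℝ (w i) (w ((i + 1) % n)) →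
      z ∈ segment ℝ (w j) (w ((j + 1) % n)) →
      ((i + 1) % n = j ∧ z = w j) ∨ ((j + 1) % n = i ∧ z = w i) := by
    intro i j hij hj hzi hzj
    have hz : z ∈ segment ℝ (w i) (w ((i + 1) % n)) ∩ segment ℝ (w j) (w ((j + 1) % n)) :=
      ⟨hzi, hzj⟩
    rw [h.2.2 i j hij hj] at hz
    split_ifs at hz with h1 h2
    · exact Or.inl ⟨by rw [h1, Nat.mod_eq_of_lt hj], hz⟩
    · refine Or.inr ⟨?_, h2.1 ▸ hz⟩
      rw [h2.2, h2.1, Nat.sub_add_cancel (by omega), Nat.mod_self]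
    · exact hz.elim
  rcases lt_or_gt_of_ne hij with h' | h'
  · exact key i j h' hj hzi hzj
  · exact (key j i h' hi hzj hzi).symm

theorem IsSimplePolygon.rotate (h : IsSimplePolygon n w) (s : ℕ) :
    IsSimplePolygon n (fun j => w ((j + s) % n)) := by
  have h3 := h.1
  have lt : ∀ j, (j + s) % n < n := fun j => Nat.mod_lt _ (by omega)
  have ne : ∀ i j, i < j → j < n → (i + s) % n ≠ (j + s) % n := fun i j hij hj heq =>
    hij.ne (add_mod_injective (by omega) hj heq)
  refine isSimplePolygon_of_forall_mem h3
    (fun i j hij hj => h.2.1 _ _ (lt i) (lt j) (ne i j hij hj)) fun i j z hij hj hzi hzj => ?_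
  rw [succ_add_mod] at hzi hzj
  rcases h.eq_of_mem_edges (lt i) (lt j) (ne i j hij hj) hzi hzj with ⟨h1, h2⟩ | ⟨h1, h2⟩
  · rw [← succ_add_mod] at h1
    have := add_mod_injective (Nat.mod_lt _ (by omega)) hj h1
    rw [Nat.mod_eq_of_lt (by omega)] at this
    exact Or.inl ⟨this, h2⟩
  · rw [← succ_add_mod] at h1
    have := add_mod_injective (Nat.mod_lt _ (by omega)) (by omega) h1
    have hj1 : j + 1 = n := by
      by_contra hne
      rw [Nat.mod_eq_of_lt (by omega)] at this
      omega
    rw [hj1, Nat.mod_self] at this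
    subst this
    exact Or.inr ⟨rfl, by omega, h2⟩

theorem exists_support_rotate
    (h : ∀ i, i < n → ∃ f : E2 →ₗ[ℝ] ℝ, f (w i) = f (w ((i + 1) % n)) ∧
      ∀ j, j < n → j ≠ i → j ≠ (i + 1) % n → f (w j) < f (w i)) (s : ℕ) {i : ℕ} (hi : i < n) :
    ∃ f : E2 →ₗ[ℝ] ℝ, f (w ((i + s) % n)) = f (w (((i + 1) % n + s) % n)) ∧
      ∀ j, j < n → j ≠ i → j ≠ (i + 1) % n → f (w ((j + s) % n)) < f (w ((i + s) % n)) := by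
  have lt : ∀ j, j % n < n := fun j => Nat.mod_lt _ (by omega)
  obtain ⟨f, h1, h2⟩ := h ((i + s) % n) (lt _)
  rw [← succ_add_mod] at h1 h2
  exact ⟨f, h1, fun j hj hji hjs => h2 _ (lt _) (fun e => hji (add_mod_injective hj hi e))
    fun e => hjs (add_mod_injective hj (lt _) e)⟩

theorem exists_motion_of_rotate {v : ℕ → E2} (s : ℕ) (hv : ∀ j < n, v j = w ((j + s) % n))
    (h : ∃ γ : ℝ → ℕ → E2, IsPlanarMotion n w γ ∧ IsConvexPolygonConfig n (γ 1)) (hn : 3 ≤ n) :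
    ∃ γ : ℝ → ℕ → E2, IsPlanarMotion n v γ ∧ IsConvexPolygonConfig n (γ 1) := by
  obtain ⟨γ, ⟨m1, m2, m3, m4⟩, hconv⟩ := h
  have lt : ∀ j, j % n < n := fun j => Nat.mod_lt _ (by omega)
  refine ⟨fun t j => γ t ((j + s) % n), ⟨fun i _ => m1 _ (lt _), fun i hi => ?_,
    fun t ht => (m3 t ht).rotate s, fun t ht i hi => ?_⟩, ?_⟩
  · exact (m2 _ (lt _)).trans (hv i hi).symm
  · have := m4 t ht _ (lt (i + s))
    rw [← succ_add_mod, ← hv _ (lt _), ← hv i hi] at this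
    exact this
  · exact isConvexPolygonConfig_of_support hn fun i hi => exists_support_rotate hconv.2 s hi

end Rotation

section Isometry

variable {n : ℕ} {w : ℕ → E2}

theorem IsSimplePolygon.map (h : IsSimplePolygon n w) (A : E2 ≃ᵃⁱ[ℝ] E2) :
    IsSimplePolygon n (fun j => A (w j)) := by
  refine ⟨h.1, fun i j hi hj hij e => h.2.1 i j hi hj hij (A.injective e), fun i j hij hj => ?_⟩
  have seg : ∀ a b : E2, segment ℝ (A a) (A b) = A '' segment ℝ a b := fun a b =>
    (image_segment ℝ A.toAffineEquiv.toAffineMap a b).symm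
  rw [seg, seg, ← Set.image_inter A.injective, h.2.2 i j hij hj]
  split_ifs <;> simp

theorem IsConvexPolygonConfig.map (h : IsConvexPolygonConfig n w) (hn : 3 ≤ n)
    (A : E2 ≃ᵃⁱ[ℝ] E2) : IsConvexPolygonConfig n (fun j => A (w j)) := by
  refine isConvexPolygonConfig_of_support hn fun i hi => ?_
  obtain ⟨f, h1, h2⟩ := h.2 i hi
  have e : ∀ x y : E2, f (A.linearIsometryEquiv.symm (A x)) - f (A.linearIsometryEquiv.symm (A y)) =
      f x - f y := fun x y => by
    rw [← map_sub, ← map_sub, ← map_sub f x, ← vsub_eq_sub (A x), ← AffineIsometryEquiv.map_vsub]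
    simp
  refine ⟨f.comp A.linearIsometryEquiv.symm.toLinearEquiv.toLinearMap, ?_, fun j hj hji hjs => ?_⟩
  · have := e (w i) (w ((i + 1) % n))
    show f (A.linearIsometryEquiv.symm (A _)) = f (A.linearIsometryEquiv.symm (A _))
    linarith
  · have := e (w j) (w i)
    have := h2 j hj hji hjs
    show f (A.linearIsometryEquiv.symm (A _)) < f (A.linearIsometryEquiv.symm (A _))
    linarith

theorem exists_motion_of_map (A : E2 ≃ᵃⁱ[ℝ] E2) (hn : 3 ≤ n)
    (h : ∃ γ : ℝ → ℕ → E2, IsPlanarMotion n (fun j => A (w j)) γ ∧ IsConvexPolygonConfig n (γ 1)) :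
    ∃ γ : ℝ → ℕ → E2, IsPlanarMotion n w γ ∧ IsConvexPolygonConfig n (γ 1) := by
  obtain ⟨γ, ⟨m1, m2, m3, m4⟩, hconv⟩ := h
  refine ⟨fun t j => A.symm (γ t j), ⟨fun i hi => A.symm.continuous.comp_continuousOn (m1 i hi),
    fun i hi => ?_, fun t ht => (m3 t ht).map A.symm, fun t ht i hi => ?_⟩, hconv.map hn A.symm⟩
  · simp only [m2 i hi, A.symm_apply_apply]
  · have := m4 t ht i hi
    rw [← dist_eq_norm, ← dist_eq_norm] at this ⊢
    rwa [A.symm.dist_map, ← A.dist_map (w _)]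

end Isometry

theorem map_eq_coord (f : E2 →ₗ[ℝ] ℝ) (z : E2) : f z = f !₂[1, 0] * z 0 + f !₂[0, 1] * z 1 := by
  conv_lhs => rw [show z = z 0 • !₂[1, 0] + z 1 • !₂[0, 1] by ext m; fin_cases m <;> simp]
  rw [map_add, map_smul, map_smul, smul_eq_mul, smul_eq_mul]
  ring

theorem isCappedChain_of_support {k : ℕ} {p : ℕ → E2} (hk : 2 ≤ k) (h00 : p 0 0 = 0)
    (h01 : p 0 1 = 0) (hk0 : 0 < p k 0) (hk1 : p k 1 = 0)
    (hbelow : ∀ j, 0 < j → j < k → p j 1 < 0) (habove : 0 < p (k + 1) 1)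
    (hsup : ∀ i, i < k → ∃ f : E2 →ₗ[ℝ] ℝ, f (p i) = f (p (i + 1)) ∧
      ∀ j, j ≤ k → j ≠ i → j ≠ i + 1 → f (p j) < f (p i)) : IsCappedChain k p := by
  have hne : ∀ i, i < k → p (i + 1) - p i ≠ 0 := by
    intro i hi h0
    rw [sub_eq_zero] at h0
    rcases (show i + 1 ≤ k from hi).eq_or_lt with h1 | h1
    · obtain ⟨f, f1, f2⟩ := hsup (i - 1) (by omega)
      have := f2 (i + 1) (by omega) (by omega) (by omega)
      rw [Nat.sub_add_cancel (by omega)] at f1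
      rw [f1, h0] at this
      exact lt_irrefl _ this
    · obtain ⟨f, f1, f2⟩ := hsup (i + 1) h1
      have := f2 i (by omega) (by omega) (by omega)
      rw [h0] at this
      exact lt_irrefl _ this
  have hsign : ∀ i, i < k → ∃ s : ℝ, ∀ j, j ≤ k → j ≠ i → j ≠ i + 1 →
      0 < s * planeCross (p (i + 1) - p i) (p j - p i) := by
    intro i hi
    obtain ⟨f, f1, f2⟩ := hsup i hi
    have he := hne i hi
    set e := p (i + 1) - p i with hedef
    have fe : f e = 0 := by rw [hedef, map_sub]; linarith
    refine ⟨-(f !₂[0, 1] * e 0 - f !₂[1, 0] * e 1), fun j hj hji hjs => ?_⟩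
    have fw : f (p j - p i) < 0 := by rw [map_sub]; linarith [f2 j hj hji hjs]
    have hnorm : 0 < e 0 ^ 2 + e 1 ^ 2 := by
      rw [← plane_norm_sq]
      exact pow_pos (norm_pos_iff.2 he) 2
    have := mul_pos (neg_pos.2 fw) hnorm
    rw [map_eq_coord] at fe this
    rw [planeCross_apply]
    have id : -(f !₂[1, 0] * (p j - p i) 0 + f !₂[0, 1] * (p j - p i) 1) * (e 0 ^ 2 + e 1 ^ 2) =
        -(f !₂[0, 1] * e 0 - f !₂[1, 0] * e 1) * (e 0 * (p j - p i) 1 - e 1 * (p j - p i) 0) := by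
      linear_combination (-(e 0 * (p j - p i) 0 + e 1 * (p j - p i) 1)) * fe
    rwa [id] at this
  have all_of_one : ∀ i j, i < k → j ≤ k → j ≠ i → j ≠ i + 1 →
      0 < planeCross (p (i + 1) - p i) (p j - p i) → ∀ m, m ≤ k → m ≠ i → m ≠ i + 1 →
      0 < planeCross (p (i + 1) - p i) (p m - p i) := by
    intro i j hi hj hji hjs hpos m hm hmi hms
    obtain ⟨s, hs⟩ := hsign i hi
    have s0 : 0 < s := pos_of_mul_pos_left (hs j hj hji hjs) hpos.le
    exact pos_of_mul_pos_right (hs m hm hmi hms) s0.le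
  refine ⟨hk, h00, h01, hk0, hk1, hbelow, fun i => ?_, habove⟩
  induction i with
  | zero =>
    intro j hi
    refine fun hj hji hjs => all_of_one 0 k hi le_rfl (by omega) (by omega) ?_ j hj hji hjs
    have := mul_pos (neg_pos.2 (hbelow 1 one_pos (by omega))) hk0
    rw [planeCross_apply]
    simp only [PiLp.sub_apply, zero_add, h00, h01, hk1]
    linarith
  | succ i ih =>
    intro j hi
    refine fun hj hji hjs => all_of_one (i + 1) i hi (by omega) (by omega) (by omega) ?_ j hj hji hjs
    have := ih (i + 2) (by omega) (by omega) (by omega) (by omega)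
    simp only [planeCross_apply, PiLp.sub_apply] at this ⊢
    rw [show i + 1 + 1 = i + 2 from rfl]
    linarith

/-- The linear isometry of the plane which sends the unit vector `(a, b)` to `(1, 0)` and the
vector `(-b, a)` to `(0, s)`, for a sign `s`. -/
def planeFrame (a b s : ℝ) (hab : a ^ 2 + b ^ 2 = 1) (hs : s ^ 2 = 1) : E2 ≃ₗᵢ[ℝ] E2 :=
  LinearIsometry.toLinearIsometryEquiv
    { toFun := fun z => !₂[a * z 0 + b * z 1, s * (a * z 1 - b * z 0)]
      map_add' := fun x y => by ext m; fin_cases m <;> simp <;> ring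
      map_smul' := fun c x => by ext m; fin_cases m <;> simp <;> ring
      norm_map' := fun z => by
        refine plane_norm_eq (norm_nonneg z) ?_
        rw [plane_norm_sq]
        simp
        linear_combination (z 0 ^ 2 + z 1 ^ 2) * hab + (a * z 1 - b * z 0) ^ 2 * hs } rfl

theorem planeFrame_fst (a b s : ℝ) (hab : a ^ 2 + b ^ 2 = 1) (hs : s ^ 2 = 1) (z : E2) :
    planeFrame a b s hab hs z 0 = a * z 0 + b * z 1 := rfl

theorem planeFrame_snd (a b s : ℝ) (hab : a ^ 2 + b ^ 2 = 1) (hs : s ^ 2 = 1) (z : E2) :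
    planeFrame a b s hab hs z 1 = s * (a * z 1 - b * z 0) := rfl

/-- A nonzero vector `d` in the kernel of a linear form `f` can be moved by a linear isometry to the
positive horizontal axis so that `f` becomes a nonnegative multiple of the height. -/
theorem exists_frame (f : E2 →ₗ[ℝ] ℝ) {d : E2} (hd : d ≠ 0) (hfd : f d = 0) :
    ∃ R : E2 ≃ₗᵢ[ℝ] E2, 0 < R d 0 ∧ R d 1 = 0 ∧ ∃ c : ℝ, 0 ≤ c ∧ ∀ z, f z = c * R z 1 := by
  have hn : 0 < ‖d‖ := norm_pos_iff.2 hd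
  have hsq := plane_norm_sq d
  set a := d 0 / ‖d‖ with ha
  set b := d 1 / ‖d‖ with hb
  have ea : d 0 = ‖d‖ * a := by rw [ha]; field_simp
  have eb : d 1 = ‖d‖ * b := by rw [hb]; field_simp
  have hab : a ^ 2 + b ^ 2 = 1 := by
    rw [ha, hb, div_pow, div_pow, ← add_div, ← hsq, div_self (by positivity)]
  have hperp : f !₂[1, 0] * a + f !₂[0, 1] * b = 0 := by
    rw [map_eq_coord, ea, eb] at hfd
    refine (mul_eq_zero.1 (?_ : ‖d‖ * _ = 0)).resolve_left hn.ne'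
    linarith
  set μ := f !₂[0, 1] * a - f !₂[1, 0] * b with hμ
  have hform : ∀ z, f z = μ * (a * z 1 - b * z 0) := by
    intro z
    rw [map_eq_coord, hμ]
    linear_combination (-(f !₂[1, 0] * z 0 + f !₂[0, 1] * z 1)) * hab + (a * z 0 + b * z 1) * hperp
  obtain ⟨s, hs, hsμ⟩ : ∃ s : ℝ, s ^ 2 = 1 ∧ 0 ≤ μ * s := by
    rcases le_total 0 μ with h | h
    · exact ⟨1, by norm_num, by linarith⟩
    · exact ⟨-1, by norm_num, by linarith⟩
  refine ⟨planeFrame a b s hab hs, ?_, ?_, μ * s, hsμ, fun z => ?_⟩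
  · rw [planeFrame_fst, ea, eb]
    have : a * (‖d‖ * a) + b * (‖d‖ * b) = ‖d‖ := by linear_combination ‖d‖ * hab
    rwa [this]
  · rw [planeFrame_snd, ea, eb]
    ring
  · rw [planeFrame_snd, hform]
    linear_combination (-(μ * (a * z 1 - b * z 0))) * hs

/-- A point outside `S` above which there is no point of `S`, with respect to a linear form `f`, has
an unbounded component in the complement of `S`. -/
theorem not_isBounded_connectedComponentIn {S : Set E2} {f : E2 →ₗ[ℝ] ℝ} {m g : E2} (hg : 0 < f g)
    (hm : m ∉ S) (hS : ∀ z ∈ S, f z ≤ f m) :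
    ¬Bornology.IsBounded (connectedComponentIn Sᶜ m) := by
  intro hbdd
  have hray : (fun t : ℝ => m + t • g) '' Set.Ici 0 ⊆ connectedComponentIn Sᶜ m := by
    refine IsPreconnected.subset_connectedComponentIn
      (isPreconnected_Ici.image _ (by fun_prop)) ⟨0, Set.self_mem_Ici, by simp⟩ ?_
    rintro _ ⟨t, ht, rfl⟩ hmem
    rcases (show (0 : ℝ) ≤ t from ht).eq_or_lt with rfl | ht
    · exact hm (by simpa using hmem)
    · have := hS _ hmem
      simp only [map_add, map_smul, smul_eq_mul] at this
      linarith [mul_pos ht hg]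
  obtain ⟨C, hC⟩ := (hbdd.subset hray).exists_norm_le
  have hg0 : 0 < ‖g‖ := norm_pos_iff.2 fun h => by simp [h] at hg
  have hC0 : 0 ≤ C := (norm_nonneg _).trans (hC _ ⟨0, Set.self_mem_Ici, rfl⟩)
  have ht : 0 ≤ (C + ‖m‖ + 1) / ‖g‖ := by positivity
  have h1 := hC _ ⟨(C + ‖m‖ + 1) / ‖g‖, ht, rfl⟩
  have h2 : ‖((C + ‖m‖ + 1) / ‖g‖) • g‖ = C + ‖m‖ + 1 := by
    rw [norm_smul, Real.norm_of_nonneg ht]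
    field_simp
  have h3 := norm_sub_le (m + ((C + ‖m‖ + 1) / ‖g‖) • g) m
  rw [add_sub_cancel_left, h2] at h3
  simp only at h1
  linarith

/-- If `x`, `a`, `b` are collinear, then the midpoint of `a` and `b` is on one of the segments
joining `x` to `a` and `b`. -/
theorem midpoint_mem_segment_of_smul {a b x : E2} {s : ℝ} (h : x - b = s • (a - b)) :
    midpoint ℝ a b ∈ segment ℝ a x ∨ midpoint ℝ a b ∈ segment ℝ x b := by
  obtain rfl : x = b + s • (a - b) := by rw [← h]; abel
  rcases le_or_gt s (1 / 2) with hs | hs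
  · left
    have h1 : 0 < 1 - s := by linarith
    refine ⟨1 - 1 / (2 * (1 - s)), 1 / (2 * (1 - s)), ?_, by positivity, by ring, ?_⟩
    · rw [sub_nonneg, div_le_one (by positivity)]; linarith
    · rw [midpoint_eq_smul_add]
      ext m
      simp
      field_simp
      ring
  · right
    have h1 : 0 < s := by linarith
    refine ⟨1 / (2 * s), 1 - 1 / (2 * s), by positivity, ?_, by ring, ?_⟩
    · rw [sub_nonneg, div_le_one (by positivity)]; linarith
    · rw [midpoint_eq_smul_add]
      ext m
      simp
      field_simp
      ring

/-- A polygon with an ear at its last vertex, whose other vertices form a convex polygon, can be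
convexified. -/
theorem exists_motion_of_last_ear {k : ℕ} {w : ℕ → E2} (hk : 1 ≤ k) (hne : w k ≠ w 0)
    (hear : openSegment ℝ (w k) (w 0) ⊆ polygonInterior (k + 2) w)
    (hsup : ∀ i, i < k + 1 → ∃ f : E2 →ₗ[ℝ] ℝ, f (w i) = f (w ((i + 1) % (k + 1))) ∧
      ∀ j, j < k + 1 → j ≠ i → j ≠ (i + 1) % (k + 1) → f (w j) < f (w i)) :
    ∃ γ : ℝ → ℕ → E2, IsPlanarMotion (k + 2) w γ ∧ IsConvexPolygonConfig (k + 2) (γ 1) := by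
  have hmid : midpoint ℝ (w k) (w 0) ∈ openSegment ℝ (w k) (w 0) :=
    ⟨1 / 2, 1 / 2, by norm_num, by norm_num, by norm_num, by
      rw [midpoint_eq_smul_add, smul_add]; simp⟩
  obtain ⟨hmB, hmC⟩ := hear hmid
  set m := midpoint ℝ (w k) (w 0) with hm
  have mod1 : ∀ i, i < k + 1 → (i + 1) % (k + 2) = i + 1 := fun i hi => Nat.mod_eq_of_lt (by omega)
  have hedge : ∀ i, i < k + 1 → m ∉ segment ℝ (w i) (w (i + 1)) := fun i hi hz =>
    hmB ⟨i, by omega, by rwa [mod1 i hi]⟩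
  have hk2 : 2 ≤ k := by
    by_contra hcon
    obtain rfl : k = 1 := by omega
    refine hedge 0 (by omega) ?_
    rw [segment_symm]
    exact openSegment_subset_segment ℝ _ _ hmid
  obtain ⟨f, f1, f2⟩ := hsup k (by omega)
  rw [Nat.mod_self] at f1 f2
  obtain ⟨R, R1, R2, c, hc, hR⟩ := exists_frame f (sub_ne_zero.2 hne) (by rw [map_sub]; linarith)
  have hfm : f m = f (w 0) := by
    rw [hm, midpoint_eq_smul_add, map_smul, map_add, f1, smul_eq_mul, invOf_eq_inv]
    ring
  have hlow : ∀ j, 0 < j → j < k → f (w j) < f (w 0) := fun j h0 hj =>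
    f1 ▸ f2 j (by omega) hj.ne h0.ne'
  have hc0 : 0 < c := by
    refine hc.lt_of_ne fun h => ?_
    have := hlow 1 one_pos (by omega)
    have e1 := hR (w 1 - w 0)
    rw [← h, zero_mul, map_sub] at e1
    linarith
  have hapex : 0 < R (w (k + 1) - w 0) 1 := by
    by_contra hcon
    have hle : f (w (k + 1)) ≤ f (w 0) := by
      have := hR (w (k + 1) - w 0)
      rw [map_sub] at this
      nlinarith
    rcases hle.eq_or_lt with heq | hlt
    · have h1 : R (w (k + 1) - w 0) 1 = 0 := by
        have := hR (w (k + 1) - w 0)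
        rw [map_sub, heq, sub_self] at this
        exact (mul_eq_zero.1 this.symm).resolve_left hc0.ne'
      have : w (k + 1) - w 0 = (R (w (k + 1) - w 0) 0 / R (w k - w 0) 0) • (w k - w 0) := by
        apply R.injective
        rw [map_smul]
        ext i
        fin_cases i
        · simp [-map_sub]
          field_simp
        · simp [-map_sub, h1, R2]
      rcases midpoint_mem_segment_of_smul this with h2 | h2
      · exact hedge k (by omega) h2
      · exact hmB ⟨k + 1, by omega, by rwa [Nat.mod_self]⟩
    · have hg : 0 < f (w 0 - w 1) := by
        rw [map_sub]; linarith [hlow 1 one_pos (by omega)]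
      have hall : ∀ j, j < k + 2 → f (w j) ≤ f (w 0) := by
        intro j hj
        rcases (show j ≤ k + 1 by omega).eq_or_lt with rfl | hj1
        · exact hle
        rcases (show j ≤ k by omega).eq_or_lt with rfl | hj2
        · exact f1.le
        rcases Nat.eq_zero_or_pos j with rfl | h0
        · exact le_rfl
        · exact (hlow j h0 hj2).le
      refine not_isBounded_connectedComponentIn hg hmB ?_ hmC
      rintro z ⟨i, hi, hz⟩
      exact hfm ▸ le_of_mem_segment f hz (hall i hi) (hall _ (Nat.mod_lt _ (by omega)))
  set A : E2 ≃ᵃⁱ[ℝ] E2 :=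
    (AffineIsometryEquiv.vaddConst ℝ (w 0)).symm.trans R.toAffineIsometryEquiv with hA
  have hAz : ∀ z, A z = R (z - w 0) := fun z => by simp [hA]
  refine exists_motion_of_map A (by omega) (IsCappedChain.exists_motion ?_)
  refine isCappedChain_of_support hk2 ?_ ?_ ?_ ?_ (fun j h0 hj => ?_) ?_ fun i hi => ?_
  · rw [hAz, sub_self, map_zero, PiLp.zero_apply]
  · rw [hAz, sub_self, map_zero, PiLp.zero_apply]
  · rwa [hAz]
  · rwa [hAz]
  · rw [hAz]
    have := hR (w j - w 0)
    rw [map_sub] at this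
    have := hlow j h0 hj
    by_contra hcon
    nlinarith
  · rwa [hAz]
  · obtain ⟨g, g1, g2⟩ := hsup i (by omega)
    rw [Nat.mod_eq_of_lt (by omega)] at g1 g2
    have e : ∀ z, (g.comp R.symm.toLinearEquiv.toLinearMap) (A z) = g z - g (w 0) := fun z => by
      rw [hAz, ← map_sub]
      simp [-map_sub]
    refine ⟨g.comp R.symm.toLinearEquiv.toLinearMap, ?_, fun j hj hji hjs => ?_⟩
    · rw [e, e, g1]
    · rw [e, e]
      exact sub_lt_sub_right (g2 j (by omega) hji hjs) _

theorem removal_apply_add_mod {n i j : ℕ} (v : ℕ → E2) (hi : i < n) (hj : j < n - 1) :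
    (fun j => if j < i then v j else v (j + 1)) ((j + i) % (n - 1)) = v ((j + (i + 1)) % n) := by
  rcases lt_or_ge (j + i) (n - 1) with h | h
  · have e1 : (j + i) % (n - 1) = j + i := Nat.mod_eq_of_lt h
    have e2 : (j + (i + 1)) % n = j + i + 1 := Nat.mod_eq_of_lt (by omega)
    rw [e1, e2]
    exact if_neg (by omega)
  · have e1 : (j + i) % (n - 1) = j + i - (n - 1) := by
      rw [Nat.mod_eq_sub_mod h, Nat.mod_eq_of_lt (by omega)]
    have e2 : (j + (i + 1)) % n = j + i - (n - 1) := by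
      rw [Nat.mod_eq_sub_mod (by omega), Nat.mod_eq_of_lt (by omega)]
      omega
    rw [e1, e2]
    exact if_pos (by omega)

/-- Every barbed simple polygon in the plane can be convexified by
a motion that remains entirely within its plane. -/
theorem barbed_polygon_convexifiable_in_plane (n : ℕ) (v : ℕ → E2)
    (hsimple : IsSimplePolygon n v) (hbarbed : IsBarbed n v) :
    ∃ γ : ℝ → ℕ → E2, IsPlanarMotion n v γ ∧ IsConvexPolygonConfig n (γ 1) := by
  obtain ⟨i, hi, hear, hconv⟩ := hbarbed
  obtain ⟨hn, hdist, -⟩ := hsimple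
  obtain ⟨k, rfl⟩ : ∃ k, n = k + 2 := ⟨n - 2, by omega⟩
  have lt : ∀ j, j % (k + 2) < k + 2 := fun j => Nat.mod_lt _ (by omega)
  have hv : ∀ j < k + 2, v j = v (((j + (k + 1 - i)) % (k + 2) + (i + 1)) % (k + 2)) := by
    intro j hj
    rw [Nat.mod_add_mod, show j + (k + 1 - i) + (i + 1) = j + (k + 2) by omega, Nat.add_mod_right,
      Nat.mod_eq_of_lt hj]
  refine exists_motion_of_rotate (w := fun j => v ((j + (i + 1)) % (k + 2))) (k + 1 - i) hv
    (exists_motion_of_last_ear (by omega) ?_ ?_ fun j hj => ?_) hn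
  · refine hdist _ _ (lt _) (lt _) fun e => ?_
    have := add_mod_injective (by omega) (by omega) e
    omega
  · rw [polygonInterior_rotate, show k + (i + 1) = i + (k + 2) - 1 by omega, zero_add]
    exact hear
  · obtain ⟨f, f1, f2⟩ := exists_support_rotate hconv.2 i hj
    have e : ∀ l, l < k + 1 → (fun j => if j < i then v j else v (j + 1)) ((l + i) % (k + 2 - 1)) =
        v ((l + (i + 1)) % (k + 2)) := fun l hl => removal_apply_add_mod v hi hl
    refine ⟨f, ?_, fun l hl hlj hls => ?_⟩
    · rw [← e j hj, ← e _ (Nat.mod_lt _ (by omega))]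
      exact f1
    · rw [← e j hj, ← e l hl]
      exact f2 l hl hlj hls
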